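/- arXiv:0806.3583 — 14 statements merged into one kernel-verified Lean document; each statement's English description precedes it below -/
import Mathlib

section
/- Fix integers b ≥ 2, n ≥ 1, m ≥ 1 and targets i_1,…,i_m ∈ {0,…,n−1}. Then the number of digit arrays C : {1,…,m}×{1,…,n} → {0,…,b−1} whose carry sequence satisfies κ_j(C) = i_j for all 1 ≤ j ≤ m equals the number of digit arrays A : {1,…,m}×{1,…,n} → {0,…,b−1} such that, writing A_j for the j-th column of A and τ_j = π(A_j)∘π(A_{j−1})∘⋯∘π(A_1), one has d(τ_j) = i_j for all 1 ≤ j ≤ m. (Equivalently, when all digits are i.i.d. uniform on {0,…,b−1}, the joint distribution of the carries (κ_1,…,κ_m) in base-b addition of n random numbers equals the joint distribution of the descent numbers (d(τ_1),…,d(τ_m)) under m successive b-shuffles.) -/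
/-- The ranking permutation (0-indexed): `rank v i` is the number of positions `i'`
whose value is smaller than `v i`, or equal to `v i` but occurring earlier.  This labels
the entries from smallest to largest, breaking ties by position. -/
def rank {n : ℕ} {α : Type*} [LinearOrder α] (v : Fin n → α) (i : Fin n) : Fin n :=
  ⟨(Finset.univ.filter fun i' => v i' < v i ∨ (v i' = v i ∧ i' < i)).card, by
    calc (Finset.univ.filter fun i' => v i' < v i ∨ (v i' = v i ∧ i' < i)).card
        ≤ (Finset.univ.erase i).card := by
          apply Finset.card_le_card
          intro x hx
          rw [Finset.mem_filter] at hx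
          rw [Finset.mem_erase]
          refine ⟨?_, Finset.mem_univ x⟩
          rintro rfl
          rcases hx.2 with h | h
          · exact lt_irrefl _ h
          · exact lt_irrefl _ h.2
      _ < Finset.univ.card := Finset.card_erase_lt_of_mem (Finset.mem_univ i)
      _ = n := by simp⟩

/-- The number of descents of a map `σ : Fin n → Fin n`:
the number of indices `i` with `σ (i+1) < σ i`. -/
noncomputable def descents {n : ℕ} (σ : Fin n → Fin n) : ℕ :=
  Nat.card {i : Fin n // ∃ h : i.1 + 1 < n, σ ⟨i.1 + 1, h⟩ < σ i}

/-- The carries when adding the `n` numbers whose base-`b` digits are the rows of `C`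
(column `s`, entry `t`): `carry C 0 = 0` and
`carry C (s+1) = ⌊(carry C s + Σ_t C s t) / b⌋`. -/
def carry {b n m : ℕ} (C : Fin m → Fin n → Fin b) : ℕ → ℕ
  | 0 => 0
  | s + 1 =>
      if h : s < m then (carry C s + ∑ t, (C ⟨s, h⟩ t : ℕ)) / b
      else carry C s

/-- `tau A j` is the composition `π(A_j) ∘ ⋯ ∘ π(A_1)` of the ranking permutations of the
first `j` columns of `A` (columns `0,…,j-1` in 0-indexed notation). -/
def tau {b n m : ℕ} (A : Fin m → Fin n → Fin b) : ℕ → (Fin n → Fin n)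
  | 0 => id
  | s + 1 => if h : s < m then rank (A ⟨s, h⟩) ∘ tau A s else tau A s

namespace CarryAux

theorem rank_lt_iff {n : ℕ} {α : Type*} [LinearOrder α] (v : Fin n → α) (i k : Fin n) :
    rank v i < rank v k ↔ v i < v k ∨ (v i = v k ∧ i < k) := by
  have key : ∀ i k : Fin n, (v i < v k ∨ (v i = v k ∧ i < k)) → rank v i < rank v k := by
    intro i k h
    rw [Fin.lt_def]
    simp only [rank]
    apply Finset.card_lt_card
    rw [Finset.ssubset_iff_of_subset]
    · refine ⟨i, ?_, ?_⟩
      · simpa using h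
      · simp
    · intro x hx
      simp only [Finset.mem_filter, Finset.mem_univ, true_and] at hx ⊢
      rcases h with h | ⟨h, h2⟩
      · rcases hx with hx | ⟨hx, _⟩
        · exact Or.inl (hx.trans h)
        · exact Or.inl (hx ▸ h)
      · rcases hx with hx | ⟨hx, hx2⟩
        · exact Or.inl (h ▸ hx)
        · exact Or.inr ⟨hx.trans h, hx2.trans h2⟩
  refine ⟨fun h => ?_, key i k⟩
  by_contra hc
  have : i = k ∨ (v k < v i ∨ (v k = v i ∧ k < i)) := by
    rcases lt_trichotomy (v i) (v k) with h1 | h1 | h1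
    · exact absurd (Or.inl h1) hc
    · rcases lt_trichotomy i k with h2 | h2 | h2
      · exact absurd (Or.inr ⟨h1, h2⟩) hc
      · exact Or.inl h2
      · exact Or.inr (Or.inr ⟨h1.symm, h2⟩)
    · exact Or.inr (Or.inl h1)
  rcases this with rfl | h3
  · exact lt_irrefl _ h
  · exact lt_asymm h (key k i h3)

/-- The number whose digits are the first `s` columns of row `t`. -/
def val {b n m : ℕ} (D : Fin m → Fin n → Fin b) : ℕ → Fin n → ℕ
  | 0, _ => 0
  | s + 1, t => if h : s < m then val D s t + b ^ s * (D ⟨s, h⟩ t : ℕ) else val D s t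

theorem val_succ {b n m : ℕ} (D : Fin m → Fin n → Fin b) {s : ℕ} (h : s < m) (t : Fin n) :
    val D (s + 1) t = val D s t + b ^ s * (D ⟨s, h⟩ t : ℕ) := by
  simp [val, h]

theorem lex_aux {M x y a c : ℕ} (hx : x < M) (h : a < c) : x + M * a < y + M * c := by
  have : M * (a + 1) ≤ M * c := Nat.mul_le_mul_left _ h
  rw [Nat.mul_add] at this
  omega

theorem val_lt {b n m : ℕ} (D : Fin m → Fin n → Fin b) (t : Fin n) :
    ∀ s ≤ m, val D s t < b ^ s := by
  intro s
  induction s with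
  | zero => intro _; simp [val]
  | succ s ih =>
    intro h
    have h1 := ih (by omega)
    rw [val_succ D (by omega), pow_succ]
    have := lex_aux (y := 0) h1 (D ⟨s, by omega⟩ t).2
    omega

theorem val_inj {b n m : ℕ} (D D' : Fin m → Fin n → Fin b) (t : Fin n) :
    ∀ s ≤ m, val D s t = val D' s t → ∀ (r : ℕ) (hr : r < m), r < s → D ⟨r, hr⟩ t = D' ⟨r, hr⟩ t := by
  intro s
  induction s with
  | zero => intro _ _ r _ h; omega
  | succ s ih =>
    intro h he r hr hrs
    rw [val_succ D (by omega), val_succ D' (by omega)] at he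
    have h1 := val_lt D t s (by omega)
    have h2 := val_lt D' t s (by omega)
    have hd : (D ⟨s, by omega⟩ t : ℕ) = D' ⟨s, by omega⟩ t := by
      rcases lt_trichotomy (D ⟨s, by omega⟩ t : ℕ) (D' ⟨s, by omega⟩ t) with h3 | h3 | h3
      · have := lex_aux (y := val D' s t) h1 h3; omega
      · exact h3
      · have := lex_aux (y := val D s t) h2 h3; omega
    rcases Nat.lt_succ_iff_lt_or_eq.mp hrs with h3 | h3
    · refine ih (by omega) ?_ r hr h3
      rw [hd] at he; omega
    · subst h3; exact Fin.ext hd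

/-! ### shuffles -/

def phi {b n m : ℕ} (A : Fin m → Fin n → Fin b) : Fin m → Fin n → Fin b :=
  fun s t => A s (tau A s.1 t)

theorem tau_succ {b n m : ℕ} (A : Fin m → Fin n → Fin b) {s : ℕ} (h : s < m) :
    tau A (s + 1) = rank (A ⟨s, h⟩) ∘ tau A s := by
  simp [tau, h]

theorem tau_lt_iff {b n m : ℕ} (A : Fin m → Fin n → Fin b) :
    ∀ s ≤ m, ∀ i k : Fin n, tau A s i < tau A s k ↔
      val (phi A) s i < val (phi A) s k ∨ (val (phi A) s i = val (phi A) s k ∧ i < k) := by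
  intro s
  induction s with
  | zero => intro _ i k; simp [tau, val]
  | succ s ih =>
    intro h i k
    have hs : s < m := by omega
    have IH := ih (by omega) i k
    rw [tau_succ A hs, Function.comp, Function.comp, rank_lt_iff, IH, val_succ _ hs, val_succ _ hs]
    have h1 := val_lt (phi A) i s (by omega)
    have h2 := val_lt (phi A) k s (by omega)
    have e1 : A ⟨s, hs⟩ (tau A s i) = phi A ⟨s, hs⟩ i := rfl
    have e2 : A ⟨s, hs⟩ (tau A s k) = phi A ⟨s, hs⟩ k := rfl
    rw [e1, e2, Fin.lt_def, Fin.ext_iff]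
    rcases lt_trichotomy (phi A ⟨s, hs⟩ i : ℕ) (phi A ⟨s, hs⟩ k) with h3 | h3 | h3
    · have := lex_aux (y := val (phi A) s k) h1 h3
      simp [h3, this]
    · simp [h3]
    · have := lex_aux (y := val (phi A) s i) h2 h3
      constructor
      · rintro (h | ⟨h, _⟩) <;> omega
      · rintro (h | ⟨h, _⟩) <;> omega

theorem tau_inj {b n m : ℕ} (A : Fin m → Fin n → Fin b) (s : ℕ) (hs : s ≤ m) :
    Function.Injective (tau A s) := by
  intro i k h
  have h1 := tau_lt_iff A s hs i k
  have h2 := tau_lt_iff A s hs k i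
  rw [h] at h1 h2
  simp only [lt_irrefl, false_iff] at h1 h2
  rw [Fin.lt_def] at h1 h2
  apply Fin.ext
  omega

theorem phi_inj {b n m : ℕ} : Function.Injective (phi (b := b) (n := n) (m := m)) := by
  intro A A' h
  have step : ∀ (s : ℕ) (hs : s < m), tau A s = tau A' s → A ⟨s, hs⟩ = A' ⟨s, hs⟩ := by
    intro s hs ht
    funext x
    obtain ⟨t, rfl⟩ := (Finite.injective_iff_surjective.mp (tau_inj A s hs.le)) x
    have := congrFun (congrFun h ⟨s, hs⟩) t
    simp only [phi] at this
    rw [this, ht]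
  have ht : ∀ s ≤ m, tau A s = tau A' s := by
    intro s
    induction s with
    | zero => intro _; rfl
    | succ s ih =>
      intro hs
      rw [tau_succ A hs, tau_succ A' hs, ih (by omega), step s hs (ih (by omega))]
  funext s
  exact step s.1 s.2 (ht s.1 s.2.le)

/-- number of descents of a sequence of naturals -/
noncomputable def desc {n : ℕ} (w : Fin n → ℕ) : ℕ :=
  Nat.card {i : Fin n // ∃ h : i.1 + 1 < n, w ⟨i.1 + 1, h⟩ < w i}

theorem descents_tau {b n m : ℕ} (A : Fin m → Fin n → Fin b) (s : ℕ) (hs : s ≤ m) :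
    descents (tau A s) = desc (val (phi A) s) := by
  unfold descents desc
  congr! 5 with i h
  rw [tau_lt_iff A s hs]
  simp [Fin.lt_def]

/-! ### carries -/

/-- partial sums -/
def pre {n : ℕ} (x : Fin n → ℕ) (k : ℕ) : ℕ :=
  ∑ t ∈ Finset.range k, if h : t < n then x ⟨t, h⟩ else 0

theorem pre_all {n : ℕ} (x : Fin n → ℕ) : pre x n = ∑ t, x t := by
  unfold pre
  rw [Finset.sum_range]
  simp

theorem pre_succ {n : ℕ} (x : Fin n → ℕ) (t : Fin n) : pre x (t.1 + 1) = pre x t.1 + x t := by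
  unfold pre
  rw [Finset.sum_range_succ]
  simp

theorem div_step {M S x : ℕ} (hx : x < M) :
    (S + x) / M = S / M + if (S + x) % M < S % M then 1 else 0 := by
  have hM : 0 < M := by omega
  have h0 := Nat.mod_lt S hM
  rw [Nat.add_div hM, Nat.add_mod, Nat.div_eq_of_lt hx, Nat.mod_eq_of_lt hx, Nat.add_zero]
  congr 1
  by_cases h : M ≤ S % M + x
  · rw [if_pos h, if_pos]
    rw [Nat.mod_eq_sub_mod h, Nat.mod_eq_of_lt] <;> omega
  · rw [if_neg h, if_neg]
    rw [Nat.mod_eq_of_lt] <;> omega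

theorem div_count (M : ℕ) (f : ℕ → ℕ) (N : ℕ) (hf : ∀ k ≤ N, f k < M) :
    (∑ t ∈ Finset.range (N + 1), f t) / M =
      ((Finset.range N).filter fun k =>
        (∑ t ∈ Finset.range (k + 2), f t) % M < (∑ t ∈ Finset.range (k + 1), f t) % M).card := by
  induction N with
  | zero => simpa using Nat.div_eq_of_lt (hf 0 le_rfl)
  | succ N ih =>
    rw [Finset.sum_range_succ, div_step (hf _ le_rfl), ih (fun k hk => hf k (by omega)),
      ← Finset.sum_range_succ, Finset.range_add_one (n := N), Finset.filter_insert,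
      ← Finset.range_add_one (n := N)]
    split_ifs
    · rw [Finset.card_insert_of_notMem (by simp)]
    · rfl

theorem desc_pre {n : ℕ} (hn : 1 ≤ n) (M : ℕ) (x : Fin n → ℕ) (hx : ∀ t, x t < M) :
    (∑ t, x t) / M = desc (fun t : Fin n => pre x (t.1 + 1) % M) := by
  obtain ⟨N, rfl⟩ : ∃ N, n = N + 1 := ⟨n - 1, by omega⟩
  rw [← pre_all]
  have := div_count M (fun t => if h : t < N + 1 then x ⟨t, h⟩ else 0) N (by
    intro k hk
    simp only [Nat.lt_succ_of_le hk, dif_pos, hx])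
  unfold pre
  rw [this, desc, ← Nat.card_eq_finsetCard]
  refine Nat.card_congr ⟨fun k => ⟨⟨k.1, ?_⟩, ?_⟩, fun i => ⟨i.1.1, ?_⟩, fun _ => rfl, fun _ => rfl⟩
  · have := (Finset.mem_filter.mp k.2).1
    rw [Finset.mem_range] at this
    omega
  · have h := Finset.mem_filter.mp k.2
    exact ⟨Nat.succ_lt_succ (Finset.mem_range.mp h.1), h.2⟩
  · obtain ⟨h, h2⟩ := i.2
    exact Finset.mem_filter.mpr ⟨Finset.mem_range.mpr (Nat.lt_of_succ_lt_succ h), h2⟩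

/-- digits of partial sums -/
def psi {b n m : ℕ} (hb : 0 < b) (C : Fin m → Fin n → Fin b) : Fin m → Fin n → Fin b :=
  fun s t => ⟨pre (val C (s.1 + 1)) (t.1 + 1) / b ^ s.1 % b, Nat.mod_lt _ hb⟩

theorem pre_val_succ {b n m : ℕ} (C : Fin m → Fin n → Fin b) {s : ℕ} (hs : s < m) (k : ℕ) :
    pre (val C (s + 1)) k = pre (val C s) k + b ^ s * pre (fun t => (C ⟨s, hs⟩ t : ℕ)) k := by
  unfold pre
  rw [Finset.mul_sum, ← Finset.sum_add_distrib]
  apply Finset.sum_congr rfl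
  intro t _
  split_ifs with h
  · rw [val_succ C hs]
  · simp

theorem val_psi {b n m : ℕ} (hb : 0 < b) (C : Fin m → Fin n → Fin b) (t : Fin n) :
    ∀ s ≤ m, val (psi hb C) s t = pre (val C s) (t.1 + 1) % b ^ s := by
  intro s
  induction s with
  | zero => intro _; simp [val, Nat.mod_one]
  | succ s ih =>
    intro hs
    rw [val_succ _ hs, ih (by omega), pow_succ, Nat.mod_mul]
    have : pre (val C s) (t.1 + 1) % b ^ s = pre (val C (s + 1)) (t.1 + 1) % b ^ s := by
      rw [pre_val_succ C hs, Nat.add_mul_mod_self_left]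
    rw [this, psi]

theorem carry_eq {b n m : ℕ} (hb : 0 < b) (C : Fin m → Fin n → Fin b) :
    ∀ s ≤ m, carry C s = (∑ t, val C s t) / b ^ s := by
  intro s
  induction s with
  | zero => intro _; simp [carry, val]
  | succ s ih =>
    intro hs
    have hs' : s < m := hs
    rw [carry, dif_pos hs', ih hs'.le, ← pre_all (val C (s + 1)), pre_val_succ C hs', pre_all,
      pre_all, pow_succ, ← Nat.div_div_eq_div_mul, Nat.add_mul_div_left _ _ (pow_pos hb s)]

theorem carry_desc {b n m : ℕ} (hb : 0 < b) (hn : 1 ≤ n) (C : Fin m → Fin n → Fin b)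
    (s : ℕ) (hs : s ≤ m) : carry C s = desc (val (psi hb C) s) := by
  rw [carry_eq hb C s hs, desc_pre hn _ _ (fun t => val_lt C t s hs)]
  congr 1
  funext t
  rw [val_psi hb C t s hs]

theorem psi_inj {b n m : ℕ} (hb : 0 < b) :
    Function.Injective (psi (n := n) (m := m) hb) := by
  intro C C' h
  have h1 : ∀ k ≤ n, pre (val C m) k ≡ pre (val C' m) k [MOD b ^ m] := by
    intro k hk
    rcases k with _ | k
    · simp [pre, Nat.ModEq]
    · have e1 := val_psi hb C ⟨k, hk⟩ m le_rfl
      have e2 := val_psi hb C' ⟨k, hk⟩ m le_rfl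
      rw [h] at e1
      exact e1.symm.trans e2
  have h2 : ∀ t, val C m t = val C' m t := by
    intro t
    have e := h1 (t.1 + 1) t.2
    rw [pre_succ, pre_succ] at e
    have := Nat.ModEq.add_left_cancel (h1 t.1 t.2.le) e
    exact Nat.ModEq.eq_of_lt_of_lt this (val_lt C t m le_rfl) (val_lt C' t m le_rfl)
  funext s t
  exact val_inj C C' t m le_rfl (h2 t) s.1 s.2 s.2

theorem card_pull {α : Type*} [Finite α] (f : α → α) (hf : Function.Injective f) (P : α → Prop) :
    Nat.card {x // P (f x)} = Nat.card {x // P x} :=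
  Nat.card_congr ((Equiv.ofBijective f (Finite.injective_iff_bijective.mp hf)).subtypeEquiv
    (fun _ => Iff.rfl))

end CarryAux

/-- **Carries and shuffling have the same joint distribution** (Theorem 2 of
Diaconis–Fulman, "Carries, Shuffling and An Amazing Matrix").
Fix `b ≥ 2`, `n ≥ 1`, `m ≥ 1` and targets `i 1,…,i m ∈ {0,…,n−1}` (0-indexed as
`i : Fin m → ℕ`).  The number of digit arrays `C` whose carries satisfy
`κ_j(C) = i j` for all `j` equals the number of digit arrays `A` such that the
compositions `τ_j = π(A_j)∘⋯∘π(A_1)` satisfy `d(τ_j) = i j` for all `j`. -/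
theorem carries_eq_descents_joint (b n m : ℕ) (hb : 2 ≤ b) (hn : 1 ≤ n) (hm : 1 ≤ m)
    (i : Fin m → ℕ) (hi : ∀ j, i j < n) :
    Nat.card {C : Fin m → Fin n → Fin b // ∀ j : Fin m, carry C (j.1 + 1) = i j} =
    Nat.card {A : Fin m → Fin n → Fin b // ∀ j : Fin m, descents (tau A (j.1 + 1)) = i j} := by
  have hb0 : 0 < b := by omega
  have e1 := CarryAux.card_pull (CarryAux.psi hb0) (CarryAux.psi_inj (n := n) (m := m) hb0)
    (fun D => ∀ j : Fin m, CarryAux.desc (CarryAux.val D (j.1 + 1)) = i j)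
  have e2 := CarryAux.card_pull CarryAux.phi (CarryAux.phi_inj (b := b) (n := n) (m := m))
    (fun D => ∀ j : Fin m, CarryAux.desc (CarryAux.val D (j.1 + 1)) = i j)
  have c : ∀ (C : Fin m → Fin n → Fin b) (j : Fin m), carry C (j.1 + 1) =
      CarryAux.desc (CarryAux.val (CarryAux.psi hb0 C) (j.1 + 1)) :=
    fun C j => CarryAux.carry_desc hb0 hn C _ j.2
  have d : ∀ (A : Fin m → Fin n → Fin b) (j : Fin m), descents (tau A (j.1 + 1)) =
      CarryAux.desc (CarryAux.val (CarryAux.phi A) (j.1 + 1)) :=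
    fun A j => CarryAux.descents_tau A _ j.2
  simp only [c, d]
  exact e1.trans e2.symm
end

section
/- Let M ≥ 1 be an integer, let x_1,…,x_n be integers with 0 ≤ x_t < M for all t, and set S_i = x_1 + ⋯ + x_i (with S_0 = 0). Then for every 0 ≤ i ≤ n−1, one has ⌊S_{i+1}/M⌋ = ⌊S_i/M⌋ + 1 if and only if (S_{i+1} mod M) < (S_i mod M). In other words, adding the (i+1)-st number increases the carried amount (by exactly one) precisely when the sequence of partial sums reduced mod M has a descent at position i. -/
/-- **Carries correspond to descents of partial sums mod `M`** (Lemma 3 of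
Diaconis–Fulman).  Let `x 0, …, x (n-1)` be numbers in `{0,…,M−1}` and let
`S i = x 0 + ⋯ + x (i-1)` be the partial sums.  For `i < n`, adding the `(i+1)`-st
number increases the carried amount `⌊S i / M⌋` (necessarily by exactly one) if and
only if the partial sums reduced mod `M` have a descent at position `i`. -/
theorem carry_iff_descent_of_partial_sums (M : ℕ) (hM : 1 ≤ M) (n : ℕ) (x : ℕ → ℕ)
    (hx : ∀ t, t < n → x t < M) (i : ℕ) (hi : i < n) :
    (∑ t ∈ Finset.range (i + 1), x t) / M = (∑ t ∈ Finset.range i, x t) / M + 1 ↔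
      (∑ t ∈ Finset.range (i + 1), x t) % M < (∑ t ∈ Finset.range i, x t) % M := by
  have hy := hx i hi
  rw [Finset.sum_range_succ]
  generalize (∑ t ∈ Finset.range i, x t) = a
  generalize x i = y at hy
  have h1 := Nat.div_add_mod a M
  have h2 := Nat.div_add_mod (a + y) M
  have h3 := Nat.mod_lt a hM
  have h4 := Nat.mod_lt (a + y) hM
  generalize a / M = q at *
  generalize (a + y) / M = p at *
  generalize a % M = r at *
  generalize (a + y) % M = s at *
  constructor
  · rintro rfl
    rw [Nat.mul_add] at h2
    omega
  · intro h
    rcases Nat.lt_trichotomy p (q + 1) with hp | hp | hp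
    · have := Nat.mul_le_mul_left M (Nat.le_of_lt_succ hp)
      omega
    · exact hp
    · have : M * (q + 2) ≤ M * p := Nat.mul_le_mul_left M hp
      rw [Nat.mul_add] at this
      omega
end

section
/- Fix integers b ≥ 2 and n ≥ 1, and let A_1, A_2 : {1,…,n} → {0,…,b−1}. Form the list of pairs whose i-th entry is (A_2(π(A_1)(i)), A_1(i)), and let ρ be the permutation of {1,…,n} ranking these pairs from lexicographically smallest to largest (comparing the first coordinate first, and breaking ties by position, i.e., ρ(i) = #{i' : pair(i') <_lex pair(i)} + #{i' ≤ i : pair(i') = pair(i)}). Then ρ = π(A_2) ∘ π(A_1), the composition of the two ranking permutations. -/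
theorem rank_lt_of {n : ℕ} {α : Type*} [LinearOrder α] (v : Fin n → α) (j i : Fin n)
    (h : v j < v i ∨ (v j = v i ∧ j < i)) : rank v j < rank v i := by
  rw [Fin.lt_def]
  simp only [rank]
  apply Finset.card_lt_card
  rw [Finset.ssubset_iff_of_subset]
  · refine ⟨j, by simpa using h, by simp⟩
  · intro x hx
    simp only [Finset.mem_filter, Finset.mem_univ, true_and] at hx ⊢
    rcases hx with hx | ⟨hx, hx'⟩ <;> rcases h with h | ⟨h, h'⟩
    · exact Or.inl (hx.trans h)
    · exact Or.inl (h ▸ hx)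
    · exact Or.inl (hx ▸ h)
    · exact Or.inr ⟨hx.trans h, hx'.trans h'⟩

theorem rank_lt_iff {n : ℕ} {α : Type*} [LinearOrder α] (v : Fin n → α) (j i : Fin n) :
    rank v j < rank v i ↔ (v j < v i ∨ (v j = v i ∧ j < i)) := by
  refine ⟨fun h => ?_, rank_lt_of v j i⟩
  by_contra hc
  rcases lt_trichotomy (v j) (v i) with h1 | h1 | h1
  · exact hc (Or.inl h1)
  · rcases lt_trichotomy j i with h2 | h2 | h2
    · exact hc (Or.inr ⟨h1, h2⟩)
    · subst h2; exact lt_irrefl _ h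
    · exact lt_asymm h (rank_lt_of v i j (Or.inr ⟨h1.symm, h2⟩))
  · exact lt_asymm h (rank_lt_of v i j (Or.inl h1))

theorem rank_injective {n : ℕ} {α : Type*} [LinearOrder α] (v : Fin n → α) :
    Function.Injective (rank v) := by
  intro i j h
  rcases lt_trichotomy i j with h2 | h2 | h2
  · have h3 := mt (rank_lt_of v i j) h.not_lt
    have h4 := mt (rank_lt_of v j i) h.not_gt
    grind
  · exact h2
  · have h3 := mt (rank_lt_of v i j) h.not_lt
    have h4 := mt (rank_lt_of v j i) h.not_gt
    grind

/-- **The two-column star map lemma** (Lemma 6, `j = 2` case, of Diaconis–Fulman).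
Given two columns `A₁ A₂` of base-`b` digits, form the list of pairs whose `i`-th entry is
`(A₂(π(A₁)(i)), A₁(i))`, ordered lexicographically (first coordinate first, ties broken by
position).  Then the ranking permutation of this list of pairs is the composition
`π(A₂) ∘ π(A₁)`. -/
theorem rank_lex_pairs_eq_comp (b n : ℕ) (hb : 2 ≤ b) (hn : 1 ≤ n)
    (A₁ A₂ : Fin n → Fin b) :
    rank (fun i : Fin n => toLex (A₂ (rank A₁ i), A₁ i)) =
      rank A₂ ∘ rank A₁ := by
  funext i
  apply Fin.ext
  have hbij : Function.Bijective (rank A₁) :=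
    Finite.injective_iff_bijective.mp (rank_injective A₁)
  rw [Function.comp_apply, rank, rank.eq_1 A₂]
  dsimp only
  refine Finset.card_bij (fun j _ => rank A₁ j) ?_ (fun _ _ _ _ h => hbij.1 h) ?_
  · intro j hj
    simp only [Finset.mem_filter, Finset.mem_univ, true_and, Prod.Lex.toLex_lt_toLex,
      EmbeddingLike.apply_eq_iff_eq, Prod.mk.injEq, rank_lt_iff] at hj ⊢
    tauto
  · intro k hk
    obtain ⟨j, rfl⟩ := hbij.2 k
    refine ⟨j, ?_, rfl⟩
    simp only [Finset.mem_filter, Finset.mem_univ, true_and, Prod.Lex.toLex_lt_toLex,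
      EmbeddingLike.apply_eq_iff_eq, Prod.mk.injEq, rank_lt_iff] at hk ⊢
    tauto
end

section
/- Fix integers b ≥ 2, n ≥ 1 and 1 ≤ j ≤ m. When the digits of the array C are chosen independently and uniformly in {0,…,b−1}, the expected value of the j-th carry is E[κ_j] = ((n−1)/2)·(1 − 1/b^j). Equivalently, b^{−nm} · Σ_C κ_j(C) = ((n−1)/2)·(1 − b^{−j}), where the sum is over all b^{nm} digit arrays C. -/
theorem carry_congr {b n m : ℕ} (C D : Fin m → Fin n → Fin b) (s : ℕ)
    (h : ∀ i : Fin m, (i : ℕ) < s → C i = D i) : carry C s = carry D s := by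
  induction s with
  | zero => rfl
  | succ s ih =>
    have h1 := ih (fun i hi => h i (by omega))
    simp only [carry]
    split_ifs with hs
    · rw [h1, h ⟨s, hs⟩ (by simp)]
    · exact h1

theorem sum_digit {b n m : ℕ} (i : Fin m) (t : Fin n) :
    2 * ∑ C : Fin m → Fin n → Fin b, ((C i t : ℕ) : ℝ) = ((b : ℝ) - 1) * (b : ℝ) ^ (n * m) := by
  have hinv : Function.Involutive
      (fun (C : Fin m → Fin n → Fin b) => fun i t => (C i t).rev) := by
    intro C; funext i t; simp
  have h := (Equiv.sum_comp (hinv.toPerm _)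
    (fun C : Fin m → Fin n → Fin b => ((C i t : ℕ) : ℝ)))
  rw [two_mul]
  nth_rewrite 1 [← h]
  rw [← Finset.sum_add_distrib]
  have : ∀ C : Fin m → Fin n → Fin b,
      (((hinv.toPerm _ C : Fin m → Fin n → Fin b) i t : ℕ) : ℝ) + ((C i t : ℕ) : ℝ) = (b : ℝ) - 1 := by
    intro C
    have h2 : ((C i t).rev : ℕ) + (C i t : ℕ) + 1 = b := by
      rw [Fin.val_rev]; have := (C i t).isLt; omega
    have h3 : (((C i t).rev : ℕ) : ℝ) + ((C i t : ℕ) : ℝ) + 1 = b := by exact_mod_cast h2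
    change (((C i t).rev : ℕ) : ℝ) + ((C i t : ℕ) : ℝ) = (b : ℝ) - 1
    linarith
  rw [Finset.sum_congr rfl (fun C _ => this C)]
  simp [pow_mul]
  ring

theorem sum_rem {b k m : ℕ} (hb : 0 < b) (s : ℕ) (hs : s < m) :
    ∑ C : Fin m → Fin (k + 1) → Fin b,
      (((carry C s + ∑ t, (C ⟨s, hs⟩ t : ℕ)) % b : ℕ) : ℝ) =
    ∑ C : Fin m → Fin (k + 1) → Fin b, ((C ⟨s, hs⟩ 0 : ℕ) : ℝ) := by
  classical
  let φ : (Fin m → Fin (k + 1) → Fin b) → (Fin m → Fin (k + 1) → Fin b) := fun C =>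
    Function.update C ⟨s, hs⟩ (Function.update (C ⟨s, hs⟩) 0
      ⟨(carry C s + ∑ t, (C ⟨s, hs⟩ t : ℕ)) % b, Nat.mod_lt _ hb⟩)
  have hφ : Function.Injective φ := by
    intro C D h
    have hne : ∀ i, i ≠ ⟨s, hs⟩ → C i = D i := by
      intro i hi
      have := congrFun h i
      simpa [φ, Function.update_of_ne hi] using this
    have hc : carry C s = carry D s := by
      apply carry_congr
      intro i hi
      apply hne
      rintro rfl
      simp at hi
    have hcol := congrFun h ⟨s, hs⟩
    simp only [φ, Function.update_self] at hcol
    have hsucc : ∀ t : Fin k, C ⟨s, hs⟩ t.succ = D ⟨s, hs⟩ t.succ := by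
      intro t
      have := congrFun hcol t.succ
      simpa [Function.update_of_ne (Fin.succ_ne_zero t)] using this
    have h0 := congrFun hcol 0
    simp only [Function.update_self, Fin.mk.injEq, Fin.sum_univ_succ, hsucc, hc] at h0
    have h1 : (C ⟨s, hs⟩ 0 : ℕ) ≡ (D ⟨s, hs⟩ 0 : ℕ) [MOD b] :=
      Nat.ModEq.add_right_cancel' _ (Nat.ModEq.add_left_cancel' _ h0)
    have h2 : C ⟨s, hs⟩ 0 = D ⟨s, hs⟩ 0 :=
      Fin.ext (h1.eq_of_lt_of_lt (Fin.isLt _) (Fin.isLt _))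
    funext i
    by_cases hi : i = ⟨s, hs⟩
    · subst hi
      funext t
      refine Fin.cases h2 hsucc t
    · exact hne i hi
  have hbij : Function.Bijective φ := Finite.injective_iff_bijective.mp hφ
  rw [← Function.Bijective.sum_comp hbij
    (fun C : Fin m → Fin (k + 1) → Fin b => ((C ⟨s, hs⟩ 0 : ℕ) : ℝ))]
  simp [φ]

theorem carry_step {b k m : ℕ} (hb : 0 < b) (s : ℕ) (hs : s < m) :
    2 * b * ∑ C : Fin m → Fin (k + 1) → Fin b, (carry C (s + 1) : ℝ) =
    2 * ∑ C : Fin m → Fin (k + 1) → Fin b, (carry C s : ℝ)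
      + k * (((b : ℝ) - 1) * (b : ℝ) ^ ((k + 1) * m)) := by
  have h1 : ∀ C : Fin m → Fin (k + 1) → Fin b,
      (b : ℝ) * (carry C (s + 1) : ℝ) + (((carry C s + ∑ t, (C ⟨s, hs⟩ t : ℕ)) % b : ℕ) : ℝ)
      = carry C s + (((C ⟨s, hs⟩ 0 : ℕ) : ℝ) + ∑ t : Fin k, ((C ⟨s, hs⟩ t.succ : ℕ) : ℝ)) := by
    intro C
    have h := Nat.div_add_mod (carry C s + ∑ t, (C ⟨s, hs⟩ t : ℕ)) b
    have h' : carry C (s + 1) = (carry C s + ∑ t, (C ⟨s, hs⟩ t : ℕ)) / b := by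
      simp [carry, hs]
    rw [← h'] at h
    have h'' := Fin.sum_univ_succ (fun t => (C ⟨s, hs⟩ t : ℕ))
    have h3 := h.trans (congrArg (carry C s + ·) h'')
    exact_mod_cast h3
  have h2 := Finset.sum_congr (rfl : (Finset.univ : Finset (Fin m → Fin (k + 1) → Fin b)) = _)
    (fun C _ => h1 C)
  simp only [Finset.sum_add_distrib] at h2
  rw [sum_rem hb s hs, ← Finset.mul_sum, Finset.sum_comm] at h2
  have h3 : 2 * ∑ t : Fin k, ∑ C : Fin m → Fin (k + 1) → Fin b,
      ((C ⟨s, hs⟩ t.succ : ℕ) : ℝ) = k * (((b : ℝ) - 1) * (b : ℝ) ^ ((k + 1) * m)) := by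
    rw [Finset.mul_sum, Finset.sum_congr rfl (fun t _ => sum_digit ⟨s, hs⟩ (Fin.succ t))]
    simp
  linarith

theorem carry_sum {b k m : ℕ} (hb : 0 < b) (s : ℕ) (hs : s ≤ m) :
    2 * (b : ℝ) ^ s * ∑ C : Fin m → Fin (k + 1) → Fin b, (carry C s : ℝ) =
      k * (b : ℝ) ^ ((k + 1) * m) * ((b : ℝ) ^ s - 1) := by
  induction s with
  | zero => simp [carry]
  | succ s ih =>
    have h1 := ih (by omega)
    have h2 := carry_step (k := k) hb s (show s < m by omega)
    rw [pow_succ]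
    linear_combination h1 + (b : ℝ) ^ s * h2

/-- **Mean of the carries** (Theorem 4 of Diaconis–Fulman): when the digits of the array
`C` are i.i.d. uniform on `{0,…,b−1}`, the expected value of the `j`-th carry is
`E[κ_j] = ((n−1)/2)·(1 − 1/b^j)`. -/
theorem expected_carry (b n m : ℕ) (hb : 2 ≤ b) (hn : 1 ≤ n)
    (j : ℕ) (hj1 : 1 ≤ j) (hjm : j ≤ m) :
    (∑ C : Fin m → Fin n → Fin b, (carry C j : ℝ)) / (b : ℝ) ^ (n * m) =
      ((n : ℝ) - 1) / 2 * (1 - 1 / (b : ℝ) ^ j) := by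
  obtain ⟨k, rfl⟩ : ∃ k, n = k + 1 := ⟨n - 1, by omega⟩
  have h := carry_sum (k := k) (m := m) (b := b) (by omega) j hjm
  have hb0 : (b : ℝ) ≠ 0 := by
    have : b ≠ 0 := by omega
    exact_mod_cast this
  have hN : (b : ℝ) ^ ((k + 1) * m) ≠ 0 := pow_ne_zero _ hb0
  have hJ : (b : ℝ) ^ j ≠ 0 := pow_ne_zero _ hb0
  rw [div_eq_iff hN]
  apply mul_left_cancel₀ (mul_ne_zero two_ne_zero hJ)
  rw [h]
  push_cast
  field_simp
  ring
end

section
/- Fix an integer base b ≥ 2 and a fixed column index j ≥ 1, and for each n ≥ 2 let κ_j^{(n)} denote the j-th carry when n numbers with i.i.d. uniform base-b digits are added, with mean μ_n = ((n−1)/2)(1 − b^{−j}) and standard deviation σ_n = √(((n+1)/12)(1 − b^{−2j})). Then for every real t, P( (κ_j^{(n)} − μ_n)/σ_n ≤ t ) → Φ(t) as n → ∞, where Φ is the standard normal cumulative distribution function Φ(t) = (1/√(2π)) ∫_{−∞}^t e^{−u²/2} du; i.e., the probability can be written as b^{−nj}·#{ C : {1,…,j}×{1,…,n} → {0,…,b−1}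 with κ_j(C) ≤ μ_n + t·σ_n }. -/
theorem carry_eq_div {b n m : ℕ} (C : Fin m → Fin n → Fin b) (s : ℕ) (hs : s ≤ m) :
    carry C s = (∑ i ∈ Finset.range s, if h : i < m then (∑ t, (C ⟨i, h⟩ t : ℕ)) * b ^ i else 0)
      / b ^ s := by
  induction s with
  | zero => simp [carry]
  | succ s ih =>
    have h : s < m := hs
    rcases Nat.eq_zero_or_pos b with hb | hb
    · subst hb
      simp [carry, h]
    rw [carry, dif_pos h, ih h.le, Finset.sum_range_succ, dif_pos h, pow_succ, ← Nat.div_div_eq_div_mul,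
      Nat.add_mul_div_right _ _ (pow_pos hb s)]

theorem carry_eq_final {b n m : ℕ} (C : Fin m → Fin n → Fin b) :
    carry C m = (∑ t, (finFunctionFinEquiv (fun s => C s t) : ℕ)) / b ^ m := by
  rw [carry_eq_div C m le_rfl]
  congr 1
  simp only [finFunctionFinEquiv_apply]
  rw [Finset.sum_comm, ← Fin.sum_univ_eq_sum_range
    (fun i => if h : i < m then (∑ t, (C ⟨i, h⟩ t : ℕ)) * b ^ i else 0)]
  refine Finset.sum_congr rfl fun i _ => ?_
  simp [Finset.sum_mul]

theorem card_carry {b j n : ℕ} (x : ℝ) :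
    Nat.card {C : Fin j → Fin n → Fin b // (carry C j : ℝ) ≤ x} =
      Nat.card {c : Fin n → Fin (b ^ j) // (((∑ i, (c i : ℕ)) / b ^ j : ℕ) : ℝ) ≤ x} := by
  refine Nat.card_congr (Equiv.subtypeEquiv
    ((Equiv.piComm _).trans (Equiv.piCongrRight fun _ => finFunctionFinEquiv)) fun C => ?_)
  rw [carry_eq_final]
  rfl

open MeasureTheory

noncomputable def unifFin (N : ℕ) [NeZero N] : Measure (Fin N) :=
  (PMF.uniformOfFintype (Fin N)).toMeasure

instance (N : ℕ) [NeZero N] : IsProbabilityMeasure (unifFin N) := by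
  unfold unifFin; infer_instance

theorem unifFin_singleton (N : ℕ) [NeZero N] (x : Fin N) : unifFin N {x} = (N : ENNReal)⁻¹ := by
  unfold unifFin
  rw [PMF.toMeasure_apply_singleton _ _ (measurableSet_singleton _)]
  simp

theorem unifFin_real (N : ℕ) [NeZero N] (x : Fin N) : (unifFin N).real {x} = (N : ℝ)⁻¹ := by
  simp [Measure.real, unifFin_singleton]

noncomputable def seqMeas (N : ℕ) [NeZero N] : Measure (ℕ → Fin N) :=
  Measure.infinitePi (fun _ => unifFin N)

instance (N : ℕ) [NeZero N] : IsProbabilityMeasure (seqMeas N) := by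
  unfold seqMeas; infer_instance

theorem seqMeas_count (N n : ℕ) [NeZero N] (p : (Fin n → Fin N) → Prop) :
    (seqMeas N).real {ω | p (fun i => ω i)} = (Nat.card {c // p c} : ℝ) / (N : ℝ) ^ n := by
  classical
  have hm : Measurable (fun (ω : ℕ → Fin N) (i : Fin n) => ω i) := by fun_prop
  have h := Measure.map_infinitePi_infinitePi_of_inj (P := fun _ : ℕ => unifFin N)
    (f := fun i : Fin n => (i : ℕ)) Fin.val_injective
  have hs : {ω : ℕ → Fin N | p (fun i => ω i)} = (fun (ω : ℕ → Fin N) (i : Fin n) => ω i) ⁻¹' {c | p c} := rfl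
  rw [hs, ← map_measureReal_apply hm (Set.toFinite _).measurableSet, seqMeas]
  erw [h]
  rw [Measure.infinitePi_eq_pi]
  have hf : {c : Fin n → Fin N | p c} = ((Finset.univ.filter p : Finset _) : Set _) := by
    ext; simp
  rw [hf, ← sum_measureReal_singleton]
  have h1 : ∀ c : Fin n → Fin N, (Measure.pi (fun _ : Fin n => unifFin N)).real {c} = ((N : ℝ) ^ n)⁻¹ := by
    intro c
    rw [Measure.real, Measure.pi_singleton]
    simp [unifFin_singleton]
  simp only [h1, Finset.sum_const, nsmul_eq_mul]
  rw [Nat.card_eq_fintype_card, Fintype.card_subtype, div_eq_mul_inv]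

theorem sum_fin_id (N : ℕ) : ∑ x : Fin N, (x : ℝ) = N * (N - 1) / 2 := by
  rw [Fin.sum_univ_eq_sum_range (fun i => (i : ℝ))]
  induction N with
  | zero => simp
  | succ n ih => rw [Finset.sum_range_succ, ih]; push_cast; ring

theorem sum_fin_sq (N : ℕ) : ∑ x : Fin N, (x : ℝ) ^ 2 = N * (N - 1) * (2 * N - 1) / 6 := by
  rw [Fin.sum_univ_eq_sum_range (fun i => (i : ℝ) ^ 2)]
  induction N with
  | zero => simp
  | succ n ih => rw [Finset.sum_range_succ, ih]; push_cast; ring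

noncomputable def stdv (N : ℕ) : ℝ := √(((N : ℝ) ^ 2 - 1) / 12)

noncomputable def stdX (N : ℕ) (x : Fin N) : ℝ := ((x : ℝ) - (N - 1) / 2) / stdv N

theorem stdv_sq (N : ℕ) (hN : 2 ≤ N) : stdv N ^ 2 = ((N : ℝ) ^ 2 - 1) / 12 := by
  have : (2 : ℝ) ≤ N := by exact_mod_cast hN
  exact Real.sq_sqrt (by nlinarith)

theorem stdv_pos (N : ℕ) (hN : 2 ≤ N) : 0 < stdv N := by
  have : (2 : ℝ) ≤ N := by exact_mod_cast hN
  exact Real.sqrt_pos.2 (by nlinarith)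

theorem stdX_mean (N : ℕ) [NeZero N] : ∫ x, stdX N x ∂(unifFin N) = 0 := by
  rw [integral_fintype (Integrable.of_finite)]
  simp only [unifFin_real, smul_eq_mul, stdX]
  rw [← Finset.mul_sum, ← Finset.sum_div, Finset.sum_sub_distrib, sum_fin_id]
  simp
  right; left; ring

theorem stdX_sq (N : ℕ) [NeZero N] (hN : 2 ≤ N) : ∫ x, stdX N x ^ 2 ∂(unifFin N) = 1 := by
  rw [integral_fintype (Integrable.of_finite)]
  have h2 : (2 : ℝ) ≤ N := by exact_mod_cast hN
  simp only [unifFin_real, smul_eq_mul, stdX, div_pow, stdv_sq N hN]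
  rw [← Finset.mul_sum, ← Finset.sum_div]
  have : ∀ x : Fin N, ((x : ℝ) - ((N : ℝ) - 1) / 2) ^ 2 =
    (x : ℝ) ^ 2 - (N - 1) * x + ((N - 1) / 2) ^ 2 := fun x => by ring
  simp only [this]
  rw [Finset.sum_add_distrib, Finset.sum_sub_distrib, ← Finset.mul_sum, sum_fin_id, sum_fin_sq]
  simp
  have h3 : (N : ℝ) ^ 2 - 1 ≠ 0 := by nlinarith
  have h4 : (N : ℝ) ≠ 0 := by linarith
  field_simp
  ring

open ProbabilityTheory Filter Topology

theorem clt_stdX (N : ℕ) [NeZero N] (hN : 2 ≤ N) :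
    TendstoInDistribution
      (fun (n : ℕ) (ω : ℕ → Fin N) ↦ (√n)⁻¹ * ∑ k ∈ Finset.range n, stdX N (ω k)) atTop
      (id : ℝ → ℝ) (fun _ ↦ seqMeas N) (gaussianReal 0 1) := by
  have hm : Measurable (stdX N) := by fun_prop
  have hp : ∀ i, MeasurePreserving (Function.eval i) (seqMeas N) (unifFin N) := fun i =>
    measurePreserving_eval_infinitePi (fun _ => unifFin N) i
  have hmap : ∀ i, (seqMeas N).map (fun ω => stdX N (ω i)) = (unifFin N).map (stdX N) := by
    intro i
    rw [← (hp i).map_eq, Measure.map_map hm (hp i).measurable]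
    rfl
  refine tendstoInDistribution_inv_sqrt_mul_sum (X := fun k (ω : ℕ → Fin N) => stdX N (ω k))
    HasLaw.id ?_ ?_ ?_ ?_
  · rw [← stdX_mean N, ← (hp 0).map_eq, integral_map (hp 0).measurable.aemeasurable (Measurable.of_discrete).aestronglyMeasurable]
  · rw [← stdX_sq N hN, ← (hp 0).map_eq, integral_map (hp 0).measurable.aemeasurable (Measurable.of_discrete).aestronglyMeasurable]
    rfl
  · exact iIndepFun_infinitePi (X := fun _ => stdX N) (fun _ => hm)
  · intro i
    exact ⟨(hm.comp (measurable_pi_apply i)).aemeasurable, (hm.comp (measurable_pi_apply 0)).aemeasurable,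
      by rw [hmap, hmap]⟩

/-- deterministic error term -/
noncomputable def errT (N n : ℕ) (ω : ℕ → Fin N) : ℝ :=
  ((1 - 1 / (N : ℝ)) / 2 - (((∑ k ∈ Finset.range n, (ω k : ℕ)) % N : ℕ) : ℝ) / N) /
    √(((n : ℝ) + 1) / 12 * (1 - 1 / (N : ℝ) ^ 2))

theorem norm_carry_eq (N n : ℕ) (hN : 2 ≤ N) (hn : 0 < n) (ω : ℕ → Fin N) :
    ((((∑ k ∈ Finset.range n, (ω k : ℕ)) / N : ℕ) : ℝ) - ((n : ℝ) - 1) / 2 * (1 - 1 / (N : ℝ))) /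
      √(((n : ℝ) + 1) / 12 * (1 - 1 / (N : ℝ) ^ 2)) =
    (√n / √((n : ℝ) + 1)) * ((√n)⁻¹ * ∑ k ∈ Finset.range n, stdX N (ω k)) + errT N n ω := by
  have h2 : (2 : ℝ) ≤ N := by exact_mod_cast hN
  have hs : √(((n : ℝ) + 1) / 12 * (1 - 1 / (N : ℝ) ^ 2)) = √((n : ℝ) + 1) * stdv N / N := by
    have : ((n : ℝ) + 1) / 12 * (1 - 1 / (N : ℝ) ^ 2) =
      ((n : ℝ) + 1) * (((N : ℝ) ^ 2 - 1) / 12) / (N : ℝ) ^ 2 := by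
      field_simp
    rw [this, Real.sqrt_div' _ (by positivity), Real.sqrt_sq (by positivity),
      Real.sqrt_mul (by positivity)]
    rfl
  have hv := stdv_pos N hN
  have hn1 : 0 < √((n : ℝ) + 1) := by positivity
  have hn0 : 0 < √(n : ℝ) := by positivity
  have hX : ∑ k ∈ Finset.range n, stdX N (ω k) =
      (((∑ k ∈ Finset.range n, (ω k : ℕ) : ℕ) : ℝ) - n * ((N - 1) / 2)) / stdv N := by
    simp only [stdX]
    rw [← Finset.sum_div, Finset.sum_sub_distrib]
    simp
  have hdm : ((∑ k ∈ Finset.range n, (ω k : ℕ) : ℕ) : ℝ) =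
      N * (((∑ k ∈ Finset.range n, (ω k : ℕ)) / N : ℕ) : ℝ) +
        (((∑ k ∈ Finset.range n, (ω k : ℕ)) % N : ℕ) : ℝ) := by
    exact_mod_cast (Nat.div_add_mod _ N).symm
  rw [errT, hs, hX, hdm]
  generalize (((∑ k ∈ Finset.range n, (ω k : ℕ)) / N : ℕ) : ℝ) = q
  generalize (((∑ k ∈ Finset.range n, (ω k : ℕ)) % N : ℕ) : ℝ) = r
  field_simp
  ring

theorem errT_tendsto (N : ℕ) (hN : 2 ≤ N) (ω : ℕ → Fin N) :
    Tendsto (fun n => errT N n ω) atTop (𝓝 0) := by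
  have h2 : (2 : ℝ) ≤ N := by exact_mod_cast hN
  have hc : 0 < 1 - 1 / (N : ℝ) ^ 2 := by
    rw [sub_pos, div_lt_one (by positivity)]; nlinarith
  have hlim : Tendsto (fun n : ℕ => 2 / √(((n : ℝ) + 1) / 12 * (1 - 1 / (N : ℝ) ^ 2))) atTop (𝓝 0) := by
    apply Tendsto.const_div_atTop
    apply Real.tendsto_sqrt_atTop.comp
    apply Tendsto.atTop_mul_const hc
    apply Tendsto.atTop_div_const (by norm_num)
    exact tendsto_atTop_add_const_right _ _ tendsto_natCast_atTop_atTop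
  refine squeeze_zero_norm (fun n => ?_) hlim
  rw [errT, norm_div, Real.norm_of_nonneg (Real.sqrt_nonneg _)]
  gcongr
  rw [Real.norm_eq_abs, abs_le]
  have hr : (((∑ k ∈ Finset.range n, (ω k : ℕ)) % N : ℕ) : ℝ) / N ≤ 1 := by
    rw [div_le_one (by positivity)]
    exact_mod_cast (Nat.mod_lt _ (by omega)).le
  have hr0 : 0 ≤ (((∑ k ∈ Finset.range n, (ω k : ℕ)) % N : ℕ) : ℝ) / N := by positivity
  have hN1 : 1 / (N : ℝ) ≤ 1 := by rw [div_le_one (by positivity)]; linarith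
  have hN0 : 0 ≤ 1 / (N : ℝ) := by positivity
  constructor <;> linarith

theorem ratio_tendsto : Tendsto (fun n : ℕ => √(n : ℝ) / √((n : ℝ) + 1)) atTop (𝓝 1) := by
  have h := (tendsto_natCast_div_add_atTop (1 : ℝ)).sqrt
  simp only [Real.sqrt_one] at h
  refine h.congr fun n => ?_
  rw [Real.sqrt_div (by positivity)]

theorem clt_carry (N : ℕ) [NeZero N] (hN : 2 ≤ N) :
    TendstoInDistribution
      (fun (n : ℕ) (ω : ℕ → Fin N) ↦ (√n / √((n : ℝ) + 1)) *
        ((√n)⁻¹ * ∑ k ∈ Finset.range n, stdX N (ω k)) + errT N n ω) atTop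
      (id : ℝ → ℝ) (fun _ ↦ seqMeas N) (gaussianReal 0 1) := by
  have hm : ∀ n, Measurable (errT N n) := by
    intro n
    have h1 : Measurable (fun ω : ℕ → Fin N => (∑ k ∈ Finset.range n, (ω k : ℕ))) := by
      refine Finset.measurable_sum _ fun k _ => ?_
      exact (measurable_of_finite (fun x : Fin N => (x : ℕ))).comp (measurable_pi_apply k)
    have h2 : Measurable (fun m : ℕ => ((1 - 1 / (N : ℝ)) / 2 - ((m % N : ℕ) : ℝ) / N) /
      √(((n : ℝ) + 1) / 12 * (1 - 1 / (N : ℝ) ^ 2))) := measurable_of_countable _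
    exact h2.comp h1
  have hY : ∀ n : ℕ, Measurable (fun ω : ℕ → Fin N => (√(n : ℝ) / √((n : ℝ) + 1), errT N n ω)) :=
    fun n => measurable_const.prodMk (hm n)
  have := TendstoInDistribution.continuous_comp_prodMk_of_tendstoInMeasure_const
    (g := fun p : ℝ × (ℝ × ℝ) => p.2.1 * p.1 + p.2.2) (by fun_prop) (clt_stdX N hN)
    (Y := fun (n : ℕ) ω => (√(n : ℝ) / √((n : ℝ) + 1), errT N n ω)) (c := ((1 : ℝ), (0 : ℝ)))
    (tendstoInMeasure_of_tendsto_ae (fun n => (hY n).aestronglyMeasurable)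
      (ae_of_all _ fun ω => ratio_tendsto.prodMk_nhds (errT_tendsto N hN ω)))
    (fun n => (hY n).aemeasurable)
  refine this.congr (fun _ => ae_of_all _ fun _ => rfl) (ae_of_all _ fun z => ?_)
  simp

theorem gauss_Iic (t : ℝ) : (gaussianReal 0 1).real (Set.Iic t) =
    (1 / √(2 * Real.pi)) * ∫ u in Set.Iic t, Real.exp (-u ^ 2 / 2) := by
  rw [Measure.real, gaussianReal_apply_eq_integral _ one_ne_zero, ENNReal.toReal_ofReal
    (integral_nonneg fun x => gaussianPDFReal_nonneg _ _ _), ← integral_const_mul]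
  simp [gaussianPDFReal]

open Filter in
/-- **Central limit theorem for carries** (Theorem 4 of Diaconis–Fulman): fix a base
`b ≥ 2` and a column `j ≥ 1`.  Normalized by its mean
`μ_n = ((n−1)/2)(1 − b^{−j})` and standard deviation
`σ_n = √(((n+1)/12)(1 − b^{−2j}))`, the `j`-th carry `κ_j` when `n` numbers with i.i.d.
uniform base-`b` digits are added has a limiting standard normal distribution as
`n → ∞`. -/
theorem carries_central_limit (b j : ℕ) (hb : 2 ≤ b) (hj : 1 ≤ j) (t : ℝ) :
    Tendsto (fun n : ℕ =>
        (Nat.card {C : Fin j → Fin n → Fin b //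
            (carry C j : ℝ) ≤
              ((n : ℝ) - 1) / 2 * (1 - 1 / (b : ℝ) ^ j) +
                t * Real.sqrt (((n : ℝ) + 1) / 12 * (1 - 1 / (b : ℝ) ^ (2 * j)))} : ℝ) /
          (b : ℝ) ^ (n * j))
      atTop
      (nhds ((1 / Real.sqrt (2 * Real.pi)) * ∫ u in Set.Iic t, Real.exp (-u ^ 2 / 2))) := by
  set N := b ^ j with hNdef
  have hN : 2 ≤ N := hb.trans (Nat.le_self_pow (by omega) b)
  have : NeZero N := ⟨by omega⟩
  have hcl := clt_carry N hN
  have hatom := nullSingletonClass_gaussianReal (μ := 0) (v := 1) one_ne_zero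
  have h := ProbabilityMeasure.tendsto_measure_of_null_frontier_of_tendsto' hcl.tendsto
    (E := Set.Iic t) (by simp)
  simp only [ProbabilityMeasure.coe_mk, Measure.map_id] at h
  have h' := (ENNReal.tendsto_toReal (measure_ne_top _ _)).comp h
  rw [← gauss_Iic]
  refine Tendsto.congr' ?_ h'
  filter_upwards [eventually_gt_atTop 0] with n hn
  have hc := card_carry (b := b) (j := j) (n := n) (((n : ℝ) - 1) / 2 * (1 - 1 / (b : ℝ) ^ j) +
                t * Real.sqrt (((n : ℝ) + 1) / 12 * (1 - 1 / (b : ℝ) ^ (2 * j))))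
  have hbN : (b : ℝ) ^ j = N := by simp [hNdef]
  have hbN2 : (b : ℝ) ^ (2 * j) = (N : ℝ) ^ 2 := by rw [mul_comm, pow_mul, hbN]
  have hbN3 : (b : ℝ) ^ (n * j) = (N : ℝ) ^ n := by rw [mul_comm, pow_mul, hbN]
  rw [hc, hbN, hbN2, hbN3, ← hNdef]
  rw [← seqMeas_count N n (fun c => (((∑ i, (c i : ℕ)) / N : ℕ) : ℝ) ≤
    ((n : ℝ) - 1) / 2 * (1 - 1 / (N : ℝ)) + t * √(((n : ℝ) + 1) / 12 * (1 - 1 / (N : ℝ) ^ 2)))]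
  simp only [Function.comp_apply]
  rw [Measure.map_apply_of_aemeasurable (hcl.forall_aemeasurable n) measurableSet_Iic, Measure.real]
  congr 2
  ext ω
  have h2 : (2 : ℝ) ≤ N := by exact_mod_cast hN
  have hpos : 0 < √(((n : ℝ) + 1) / 12 * (1 - 1 / (N : ℝ) ^ 2)) := by
    apply Real.sqrt_pos.2
    apply mul_pos (by positivity)
    rw [sub_pos, div_lt_one (by positivity)]; nlinarith
  rw [Set.mem_preimage, Set.mem_Iic, ← norm_carry_eq N n hN hn ω, div_le_iff₀ hpos,
    sub_le_iff_le_add', Set.mem_setOf_eq, Fin.sum_univ_eq_sum_range (fun i => (ω i : ℕ))]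
end

section
/- Fix integers b ≥ 2 and n ≥ 1. The Holte carries matrix P_b is totally positive of order two: for all 0 ≤ i ≤ i' ≤ n−1 and 0 ≤ j ≤ j' ≤ n−1, P_b(i,j)·P_b(i',j') ≥ P_b(i,j')·P_b(i',j). -/
/-- Holte's "amazing matrix": the carries Markov chain transition probability
`P_b(i,j) = b^{-n} · #{(x_1,…,x_n) ∈ {0,…,b−1}^n : jb ≤ i + x_1 + ⋯ + x_n ≤ (j+1)b − 1}`. -/
noncomputable def Pmat (b n : ℕ) (i j : ℕ) : ℝ :=
  (Nat.card {x : Fin n → Fin b //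
      j * b ≤ i + ∑ t, (x t : ℕ) ∧ i + ∑ t, (x t : ℕ) ≤ (j + 1) * b - 1} : ℝ) / b ^ n

/-- Number of digit vectors with sum `s`. -/
noncomputable def cnt (b n : ℕ) (s : ℤ) : ℝ :=
  ∑ x : Fin n → Fin b, if ∑ t, ((x t : ℕ) : ℤ) = s then 1 else 0

lemma cnt_nonneg (b n : ℕ) (s : ℤ) : 0 ≤ cnt b n s :=
  Finset.sum_nonneg fun _ _ => by split_ifs <;> norm_num

lemma cnt_zero (b : ℕ) (s : ℤ) : cnt b 0 s = if s = 0 then 1 else 0 := by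
  simp [cnt, eq_comm]

lemma cnt_split (b n : ℕ) (s : ℤ) : cnt b (n + 1) s =
    ∑ k : Fin b, ∑ x : Fin n → Fin b, if ((k : ℕ) : ℤ) + ∑ t, ((x t : ℕ) : ℤ) = s then 1 else 0 := by
  unfold cnt
  rw [← (Fin.consEquiv (fun _ : Fin (n + 1) => Fin b)).sum_comp, Fintype.sum_prod_type]
  simp [Fin.sum_univ_succ, Fin.consEquiv]

lemma cnt_succ (b n : ℕ) (s : ℤ) : cnt b (n + 1) s = ∑ k : Fin b, cnt b n (s - (k : ℕ)) := by
  rw [cnt_split]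
  refine Finset.sum_congr rfl fun k _ => Finset.sum_congr rfl fun x _ => ?_
  congr 1
  apply propext
  constructor <;> intro h <;> linarith

lemma digit_ind (b : ℕ) (u s : ℤ) :
    (∑ k : Fin b, if ((k : ℕ) : ℤ) + u = s then (1 : ℝ) else 0) =
      if 0 ≤ s - u ∧ s - u < b then 1 else 0 := by
  split_ifs with h
  · rw [Finset.sum_eq_single (⟨(s - u).toNat, by omega⟩ : Fin b)]
    · rw [if_pos]; simp only; omega
    · intro k _ hk
      rw [if_neg]
      intro h'
      apply hk
      ext
      simp only
      omega
    · simp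
  · apply Finset.sum_eq_zero
    intro k _
    rw [if_neg]
    have := k.2
    omega

lemma window (b : ℕ) (f : ℤ → ℝ) (s lo hi : ℤ) (hlo : lo ≤ s - b + 1) (hhi : s ≤ hi) :
    ∑ k : Fin b, f (s - (k : ℕ)) =
      ∑ z ∈ Finset.Icc lo hi, (if 0 ≤ s - z ∧ s - z < b then 1 else 0) * f z := by
  simp_rw [← digit_ind, Finset.sum_mul]
  rw [Finset.sum_comm]
  refine Finset.sum_congr rfl fun k _ => ?_
  have hk := k.2
  rw [Finset.sum_eq_single (s - ((k : ℕ) : ℤ))]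
  · simp
  · intro z _ hz
    rw [if_neg, zero_mul]
    omega
  · intro h
    exfalso
    apply h
    rw [Finset.mem_Icc]
    omega

/-- The two by two Cauchy–Binet inequality. -/
lemma cauchy_binet {S : Finset ℤ} (p q r t : ℤ → ℝ)
    (h1 : ∀ z w, z ≤ w → p w * q z ≤ p z * q w)
    (h2 : ∀ z w, z ≤ w → t z * r w ≤ r z * t w) :
    (∑ z ∈ S, p z * t z) * (∑ z ∈ S, q z * r z) ≤
      (∑ z ∈ S, p z * r z) * (∑ z ∈ S, q z * t z) := by
  have key : 0 ≤ ∑ z ∈ S, ∑ w ∈ S, (p z * q w - p w * q z) * (r z * t w - t z * r w) := by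
    refine Finset.sum_nonneg fun z _ => Finset.sum_nonneg fun w _ => ?_
    rcases le_total z w with h | h
    · exact mul_nonneg (sub_nonneg.2 (h1 z w h)) (sub_nonneg.2 (h2 z w h))
    · apply mul_nonneg_of_nonpos_of_nonpos
      · linarith [h1 w z h]
      · linarith [h2 w z h]
  have e : ∑ z ∈ S, ∑ w ∈ S, (p z * q w - p w * q z) * (r z * t w - t z * r w) =
      (∑ z ∈ S, p z * r z) * (∑ z ∈ S, q z * t z) - (∑ z ∈ S, p z * t z) * (∑ z ∈ S, q z * r z)
      - (∑ z ∈ S, q z * r z) * (∑ z ∈ S, p z * t z)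
      + (∑ z ∈ S, q z * t z) * (∑ z ∈ S, p z * r z) := by
    simp_rw [Finset.sum_mul_sum, ← Finset.sum_sub_distrib, ← Finset.sum_add_distrib]
    refine Finset.sum_congr rfl fun z _ => Finset.sum_congr rfl fun w _ => ?_
    ring
  linarith

lemma cnt_tp2 (b n : ℕ) : ∀ x x' y y' : ℤ, x ≤ x' → y ≤ y' →
    cnt b n (x - y') * cnt b n (x' - y) ≤ cnt b n (x - y) * cnt b n (x' - y') := by
  induction n with
  | zero =>
    intro x x' y y' hx hy
    simp only [cnt_zero]
    split_ifs <;> first | omega | norm_num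
  | succ n ih =>
    intro x x' y y' hx hy
    have conv : ∀ s v : ℤ, x ≤ s → s ≤ x' → cnt b (n + 1) (s - v) =
        ∑ z ∈ Finset.Icc (x - b + 1) x',
          (if 0 ≤ s - z ∧ s - z < b then 1 else 0) * cnt b n (z - v) := by
      intro s v h1 h2
      rw [cnt_succ, ← window b (fun z => cnt b n (z - v)) s _ _ (by omega) h2]
      refine Finset.sum_congr rfl fun k _ => ?_
      congr 1
      ring
    rw [conv x y' le_rfl hx, conv x' y hx le_rfl, conv x y le_rfl hx, conv x' y' hx le_rfl]
    apply cauchy_binet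
    · intro z w hzw
      split_ifs <;> first | omega | norm_num
    · intro z w hzw
      exact ih z w y y' hzw hy

lemma Pmat_eq (b n i j : ℕ) (hb : 2 ≤ b) :
    Pmat b n i j = cnt b (n + 1) (((j : ℤ) + 1) * b - 1 - i) / b ^ n := by
  classical
  unfold Pmat
  congr 1
  rw [cnt_split, Finset.sum_comm, Nat.card_eq_fintype_card, Fintype.card_subtype,
    Finset.card_filter]
  push_cast
  refine Finset.sum_congr rfl fun x _ => ?_
  rw [digit_ind]
  congr 1
  apply propext
  rw [← Nat.cast_sum]
  generalize ∑ t, (x t : ℕ) = u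
  rw [show (j + 1) * b = j * b + b by ring,
    show ((j : ℤ) + 1) * b = ((j * b : ℕ) : ℤ) + b by push_cast; ring]
  generalize j * b = v
  omega

/-- **Lemma 5 of Diaconis–Fulman**: Holte's carries matrix is totally positive of order
two: every `2×2` minor is non-negative. -/
theorem holte_matrix_TP2 (b n : ℕ) (hb : 2 ≤ b) (hn : 1 ≤ n)
    (i i' j j' : ℕ) (hii' : i ≤ i') (hi' : i' ≤ n - 1) (hjj' : j ≤ j') (hj' : j' ≤ n - 1) :
    Pmat b n i j' * Pmat b n i' j ≤ Pmat b n i j * Pmat b n i' j' := by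
  simp only [Pmat_eq b n _ _ hb, div_mul_div_comm]
  apply div_le_div_of_nonneg_right _ (by positivity)
  have hu : ((j : ℤ) + 1) * b - 1 ≤ ((j' : ℤ) + 1) * b - 1 := by
    have : (j : ℤ) ≤ j' := by exact_mod_cast hjj'
    gcongr
  have := cnt_tp2 b (n + 1) _ _ (i : ℤ) (i' : ℤ) hu (by exact_mod_cast hii')
  linarith
end

section
/- Fix integers b ≥ 2 and N ≥ 1, and let M be the N×N matrix with M(i,j) = 1 if 0 ≤ i − j ≤ b−1 and M(i,j) = 0 otherwise (a lower triangular banded 0/1 matrix with ones on the main diagonal and the next b−1 subdiagonals). Then M is totally positive of order two: for all i ≤ i' and j ≤ j', M(i,j)·M(i',j') ≥ M(i,j')·M(i',j). -/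
/-- The banded 0/1 matrix with ones on the main diagonal and on the next `b−1`
subdiagonals: `M(i,j) = 1` if `0 ≤ i − j ≤ b − 1` and `M(i,j) = 0` otherwise. -/
def bandMat (b : ℕ) (i j : ℕ) : ℝ :=
  if j ≤ i ∧ i ≤ j + (b - 1) then 1 else 0

/-- The banded lower-triangular 0/1 matrix appearing in the proof that Holte's carries
matrix is TP₂ is itself totally positive of order two: every `2×2` minor is
non-negative. -/
theorem band_matrix_TP2 (b N : ℕ) (hb : 2 ≤ b) (hN : 1 ≤ N)
    (i i' j j' : ℕ) (hii' : i ≤ i') (hjj' : j ≤ j') (hi' : i' < N) (hj' : j' < N) :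
    bandMat b i j' * bandMat b i' j ≤ bandMat b i j * bandMat b i' j' := by
  have h0 : ∀ k l, 0 ≤ bandMat b k l := by
    intro k l
    unfold bandMat
    split_ifs <;> norm_num
  by_cases h1 : j' ≤ i ∧ i ≤ j' + (b - 1)
  · by_cases h2 : j ≤ i' ∧ i' ≤ j + (b - 1)
    · have h3 : j ≤ i ∧ i ≤ j + (b - 1) := by omega
      have h4 : j' ≤ i' ∧ i' ≤ j' + (b - 1) := by omega
      unfold bandMat
      rw [if_pos h1, if_pos h2, if_pos h3, if_pos h4]
    · have h : bandMat b i' j = 0 := if_neg h2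
      rw [h, mul_zero]
      exact mul_nonneg (h0 _ _) (h0 _ _)
  · have h : bandMat b i j' = 0 := if_neg h1
    rw [h, zero_mul]
    exact mul_nonneg (h0 _ _) (h0 _ _)
end

section
/- Fix integers b ≥ 2 and n ≥ 1, and let P_b be the Holte carries matrix with stationary distribution π(j) = A(n,j)/n!. Then for every r ≥ 0 the function j ↦ (P_b)^r(0,j)/π(j) is non-increasing in j on {0,…,n−1}; consequently the separation distance of the carries chain started at 0, sep(r) = max_{0≤j≤n−1} [1 − (P_b)^r(0,j)/π(j)], is attained at the state j = n−1, i.e., sep(r) = 1 − (P_b)^r(0,n−1)/π(n−1). -/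
/-- Holte's "amazing matrix" as an `n × n` real matrix: the carries Markov chain has
`P_b(i,j) = b^{-n} · #{(x_1,…,x_n) ∈ {0,…,b−1}^n : jb ≤ i + x_1 + ⋯ + x_n ≤ (j+1)b − 1}`. -/
noncomputable def PM (b n : ℕ) : Matrix (Fin n) (Fin n) ℝ :=
  Matrix.of fun i j =>
    (Nat.card {x : Fin n → Fin b //
        (j : ℕ) * b ≤ (i : ℕ) + ∑ t, (x t : ℕ) ∧
          (i : ℕ) + ∑ t, (x t : ℕ) ≤ ((j : ℕ) + 1) * b - 1} : ℝ) / b ^ n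

/-- The stationary distribution of the carries chain: `π(j) = A(n,j)/n!` where `A(n,j)`
is the Eulerian number, the number of permutations of `{1,…,n}` with exactly `j`
descents. -/
noncomputable def eulerStat (n : ℕ) (j : ℕ) : ℝ :=
  (Nat.card {σ : Equiv.Perm (Fin n) // descents ⇑σ = j} : ℝ) / (Nat.factorial n)

/-- Two-row Cauchy–Binet inequality. -/
lemma cb_ineq {ι : Type*} [LinearOrder ι] (J : Finset ι) (p q s t : ι → ℝ)
    (h1 : ∀ j ∈ J, ∀ l ∈ J, j < l → p l * q j ≤ p j * q l)
    (h2 : ∀ j ∈ J, ∀ l ∈ J, j < l → s l * t j ≤ s j * t l) :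
    (∑ j ∈ J, p j * t j) * (∑ j ∈ J, q j * s j) ≤ (∑ j ∈ J, p j * s j) * (∑ j ∈ J, q j * t j) := by
  have e1 : (∑ j ∈ J, p j * s j) * (∑ j ∈ J, q j * t j) - (∑ j ∈ J, p j * t j) * (∑ j ∈ J, q j * s j)
      = ∑ j ∈ J, ∑ l ∈ J, p j * q l * (s j * t l - s l * t j) := by
    rw [Finset.sum_mul_sum, Finset.sum_mul_sum, ← Finset.sum_sub_distrib]
    refine Finset.sum_congr rfl fun j _ => ?_
    rw [← Finset.sum_sub_distrib]
    refine Finset.sum_congr rfl fun l _ => ?_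
    ring
  have e2 : ∑ j ∈ J, ∑ l ∈ J, p j * q l * (s j * t l - s l * t j)
      = ∑ j ∈ J, ∑ l ∈ J, - (p l * q j * (s j * t l - s l * t j)) := by
    rw [Finset.sum_comm]
    refine Finset.sum_congr rfl fun j _ => Finset.sum_congr rfl fun l _ => ?_
    ring
  have e3 : 0 ≤ ∑ j ∈ J, ∑ l ∈ J, p j * q l * (s j * t l - s l * t j)
      + ∑ j ∈ J, ∑ l ∈ J, - (p l * q j * (s j * t l - s l * t j)) := by
    rw [← Finset.sum_add_distrib]
    refine Finset.sum_nonneg fun j hj => ?_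
    rw [← Finset.sum_add_distrib]
    refine Finset.sum_nonneg fun l hl => ?_
    have : p j * q l * (s j * t l - s l * t j) + - (p l * q j * (s j * t l - s l * t j))
      = (p j * q l - p l * q j) * (s j * t l - s l * t j) := by ring
    rw [this]
    rcases lt_trichotomy j l with h | h | h
    · exact mul_nonneg (by linarith [h1 j hj l hl h]) (by linarith [h2 j hj l hl h])
    · subst h; simp
    · exact mul_nonneg_of_nonpos_of_nonpos (by linarith [h1 l hl j hj h]) (by linarith [h2 l hl j hj h])
  linarith

open PowerSeries in
/-- The box polynomial `1 + X + ⋯ + X^(b-1)`. -/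
noncomputable def boxQ (b : ℕ) : PowerSeries ℝ := ∑ y ∈ Finset.range b, X ^ y

open PowerSeries in
lemma coeff_boxQ (b m : ℕ) : coeff m (boxQ b) = if m < b then 1 else 0 := by
  simp [boxQ, coeff_X_pow]

open PowerSeries in
lemma coeff_X_boxQ (b i m : ℕ) :
    coeff m (X ^ i * boxQ b) = if i ≤ m ∧ m < i + b then 1 else 0 := by
  rw [coeff_X_pow_mul', coeff_boxQ]
  split_ifs <;> first | rfl | omega

open PowerSeries in
lemma coeff_mul_boxQ (b m M : ℕ) (hM : m < M) (f : PowerSeries ℝ) :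
    coeff m (f * boxQ b) = ∑ j ∈ Finset.range M, coeff j f * (if j ≤ m ∧ m < j + b then 1 else 0) := by
  rw [coeff_mul, Finset.Nat.sum_antidiagonal_eq_sum_range_succ_mk]
  have : Finset.range (m+1) ⊆ Finset.range M := Finset.range_subset_range.2 hM
  rw [← Finset.sum_subset this]
  · refine Finset.sum_congr rfl fun j hj => ?_
    rw [Finset.mem_range] at hj
    simp only [coeff_boxQ]
    congr 1
    split_ifs <;> first | rfl | omega
  · intro x _ hx
    rw [Finset.mem_range] at hx
    rw [if_neg (by omega), mul_zero]

open PowerSeries in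
lemma box_tp2 (b N : ℕ) : ∀ i i' m m' : ℕ, i ≤ i' → m ≤ m' →
    coeff m' (X ^ i * boxQ b ^ N) * coeff m (X ^ i' * boxQ b ^ N) ≤
    coeff m (X ^ i * boxQ b ^ N) * coeff m' (X ^ i' * boxQ b ^ N) := by
  induction N with
  | zero =>
    intro i i' m m' hi hm
    simp only [pow_zero, mul_one, coeff_X_pow]
    split_ifs <;> first | omega | norm_num
  | succ N ih =>
    intro i i' m m' hi hm
    simp only [pow_succ, ← mul_assoc]
    rw [coeff_mul_boxQ b m (m'+1) (by omega), coeff_mul_boxQ b m (m'+1) (by omega),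
      coeff_mul_boxQ b m' (m'+1) (by omega), coeff_mul_boxQ b m' (m'+1) (by omega)]
    apply cb_ineq
    · intro j _ l _ h
      exact ih i i' j l hi h.le
    · intro j _ l _ h
      split_ifs <;> first | omega | norm_num

open PowerSeries in
lemma PM_eq (b n : ℕ) (hb : 1 ≤ b) (i j : Fin n) :
    PM b n i j = coeff ((j + 1) * b - 1) (X ^ (i : ℕ) * boxQ b ^ (n + 1)) / b ^ n := by
  classical
  unfold PM
  rw [Matrix.of_apply]
  congr 1
  have h : (X : PowerSeries ℝ) ^ (i : ℕ) * boxQ b ^ (n + 1)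
      = ∑ x : Fin n → Fin b, X ^ ((i : ℕ) + ∑ t, (x t : ℕ)) * boxQ b := by
    have : boxQ b ^ n = ∑ x : Fin n → Fin b, (X : PowerSeries ℝ) ^ (∑ t, (x t : ℕ)) := by
      rw [boxQ, Finset.sum_range, Fintype.sum_pow]
      refine Finset.sum_congr rfl fun x _ => ?_
      rw [Finset.prod_pow_eq_pow_sum]
    rw [pow_succ, this, Finset.sum_mul, Finset.mul_sum]
    refine Finset.sum_congr rfl fun x _ => ?_
    ring
  rw [h, map_sum]
  simp only [coeff_X_boxQ]
  rw [Finset.sum_boole, Nat.card_eq_fintype_card, Fintype.card_subtype]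
  congr 2
  ext x
  simp only [Finset.mem_filter, Finset.mem_univ, true_and]
  have : ((j:ℕ) + 1) * b = j * b + b := by ring
  omega

open PowerSeries in
/-- The Eulerian polynomial. -/
noncomputable def eulP (n : ℕ) : PowerSeries ℝ := ∑ σ : Equiv.Perm (Fin n), X ^ (descents ⇑σ)

open PowerSeries in
lemma coeff_eulP (n j : ℕ) : coeff j (eulP n) = eulerStat n j * n.factorial := by
  classical
  unfold eulerStat eulP
  rw [div_mul_cancel₀ _ (by positivity), map_sum, Nat.card_eq_fintype_card, Fintype.card_subtype]
  simp only [coeff_X_pow, Finset.sum_boole]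
  simp only [eq_comm]

open PowerSeries in
lemma section_mul (b N : ℕ) (hb : 1 ≤ b) : ∀ (f g : PowerSeries ℝ),
    (∀ j, coeff ((j + 1) * b - 1) f = coeff j g) →
    ∀ j, coeff ((j + 1) * b - 1) (f * (1 - X ^ b) ^ N) = coeff j (g * (1 - X) ^ N) := by
  induction N with
  | zero => intro f g h j; simpa using h j
  | succ N ih =>
    intro f g h j
    rw [pow_succ', pow_succ', ← mul_assoc, ← mul_assoc]
    apply ih
    intro j
    have h1 := coeff_mul_X_pow' g 1 j
    rw [pow_one] at h1
    rw [mul_sub, mul_sub, mul_one, mul_one, map_sub, map_sub, coeff_mul_X_pow', h1, h]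
    congr 1
    rcases j with _ | j
    · rw [if_neg (by omega), if_neg (by omega)]
    · have : (j + 1 + 1) * b = (j+1) * b + b := by ring
      have h3 : 1 ≤ (j+1) * b := by nlinarith
      rw [if_pos (by omega), if_pos (by omega), ← h]
      congr 1
      congr 1
      simp only [Nat.add_sub_cancel]
      omega

lemma descents_lt {n : ℕ} (hn : 1 ≤ n) (σ : Fin n → Fin n) : descents σ < n := by
  classical
  unfold descents
  rw [Nat.card_eq_fintype_card]
  conv_rhs => rw [← Fintype.card_fin n]
  apply Fintype.card_subtype_lt (x := ⟨n-1, by omega⟩)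
  rintro ⟨h, _⟩
  simp only at h
  omega

lemma mono_count (k N : ℕ) (D : Fin N → Prop) [DecidablePred D] :
    Nat.card {g : Fin (N+1) → Fin (k+1) // ∀ t : Fin N, (g t.castSucc < g t.succ ∨
      g t.castSucc = g t.succ ∧ ¬ D t)} =
      (k + (N + 1) - (Finset.univ.filter D).card).choose (N + 1) := by
  classical
  set d := (Finset.univ.filter D).card with hd
  let a : Fin (N+1) → ℕ := fun i => (Finset.univ.filter fun t : Fin N => t.castSucc < i ∧ ¬ D t).card
  have hstep : ∀ t : Fin N, a t.succ = a t.castSucc + if D t then 0 else 1 := by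
    intro t
    by_cases h : D t
    · rw [if_pos h, add_zero]
      simp only [a]
      congr 1
      ext s
      simp only [Finset.mem_filter, Finset.mem_univ, true_and, Fin.lt_def, Fin.val_castSucc, Fin.val_succ]
      constructor
      · rintro ⟨h1, h2⟩
        refine ⟨?_, h2⟩
        have : s ≠ t := by rintro rfl; exact h2 h
        have : (s:ℕ) ≠ t := fun h => this (Fin.ext h)
        omega
      · rintro ⟨h1, h2⟩
        exact ⟨by omega, h2⟩
    · rw [if_neg h]
      simp only [a]
      rw [← Finset.card_insert_of_notMem (a := t) (by simp)]
      congr 1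
      ext s
      simp only [Finset.mem_filter, Finset.mem_univ, true_and, Fin.lt_def, Fin.val_castSucc, Fin.val_succ,
        Finset.mem_insert]
      constructor
      · rintro ⟨h1, h2⟩
        by_cases hs : s = t
        · exact Or.inl hs
        · have : (s:ℕ) ≠ t := fun h => hs (Fin.ext h)
          exact Or.inr ⟨by omega, h2⟩
      · rintro (rfl | ⟨h1, h2⟩)
        · exact ⟨by omega, h⟩
        · exact ⟨by omega, h2⟩
  have ha0 : a 0 = 0 := by simp [a]
  have halast : a (Fin.last N) + d = N := by
    have h := Finset.card_filter_add_card_filter_not (s := (Finset.univ : Finset (Fin N))) D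
    rw [Finset.card_univ, Fintype.card_fin] at h
    have : a (Fin.last N) = (Finset.univ.filter fun t : Fin N => ¬ D t).card := by
      simp [a, Fin.castSucc_lt_last]
    omega
  have hmono : Monotone a := by
    rw [Fin.monotone_iff_le_succ]
    intro t; rw [hstep]; omega
  have halast' : ∀ i, a i ≤ a (Fin.last N) := fun i => hmono (Fin.le_last i)
  have hcard : Nat.card (Fin (N+1) ↪o Fin (k + (N+1) - d)) = (k + (N + 1) - d).choose (N + 1) := by
    rw [Nat.card_congr (Set.powersetCard.ofFinEmbEquiv), Set.powersetCard.card, Nat.card_fin]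
  rw [← hcard]
  have hge : ∀ e : Fin (N+1) ↪o Fin (k + (N+1) - d), ∀ i, a i ≤ (e i : ℕ) := by
    intro e i
    induction i using Fin.induction with
    | zero => rw [ha0]; exact Nat.zero_le _
    | succ t ih =>
      have h1 : e t.castSucc < e t.succ := e.strictMono (Fin.castSucc_lt_succ)
      rw [Fin.lt_def] at h1
      have h2 := hstep t
      split_ifs at h2 <;> omega
  have hle : ∀ e : Fin (N+1) ↪o Fin (k + (N+1) - d), ∀ i, (e i : ℕ) - a i < k + 1 := by
    intro e i
    have hm : Monotone (fun i => (e i : ℕ) - a i) := by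
      rw [Fin.monotone_iff_le_succ]
      intro t
      have h1 : e t.castSucc < e t.succ := e.strictMono (Fin.castSucc_lt_succ)
      rw [Fin.lt_def] at h1
      have h2 := hstep t
      have h3 := hge e t.castSucc
      split_ifs at h2 <;> omega
    have h1 := hm (Fin.le_last i)
    have h2 := (e (Fin.last N)).2
    simp only at h1
    omega
  refine Nat.card_congr
    { toFun := fun g => OrderEmbedding.ofStrictMono
        (fun i => (⟨g.1 i + a i, ?_⟩ : Fin (k + (N+1) - d))) ?_
      invFun := fun e => ⟨fun i => ⟨(e i : ℕ) - a i, hle e i⟩, ?_⟩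
      left_inv := ?_
      right_inv := ?_ }
  · have := (g.1 i).2
    have := halast' i
    omega
  · rw [Fin.strictMono_iff_lt_succ]
    intro t
    rw [Fin.lt_def]
    have h2 := hstep t
    have h3 := g.2 t
    rw [Fin.lt_def, Fin.ext_iff] at h3
    simp only
    split_ifs at h2 with h
    · have : ((g.1 t.castSucc : Fin (k+1)) : ℕ) < g.1 t.succ := by tauto
      omega
    · omega
  · intro t
    have h1 : e t.castSucc < e t.succ := e.strictMono (Fin.castSucc_lt_succ)
    rw [Fin.lt_def] at h1
    have h2 := hstep t
    have h3 := hge e t.castSucc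
    have h4 := hge e t.succ
    rw [Fin.lt_def, Fin.ext_iff]
    simp only
    split_ifs at h2 with h
    · left; omega
    · by_cases h5 : (e t.castSucc : ℕ) - a t.castSucc < (e t.succ : ℕ) - a t.succ
      · exact Or.inl h5
      · exact Or.inr ⟨by omega, h⟩
  · intro g
    ext i
    simp
  · intro e
    ext i
    have := hge e i
    simp
    omega

lemma sort_iff (k N : ℕ) (σ : Equiv.Perm (Fin (N+1))) (f : Fin (N+1) → Fin (k+1)) :
    Tuple.sort f = σ ↔ ∀ t : Fin N, (f (σ t.castSucc) < f (σ t.succ) ∨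
      f (σ t.castSucc) = f (σ t.succ) ∧ ¬ (σ t.succ < σ t.castSucc)) := by
  rw [eq_comm, Tuple.eq_sort_iff', Fin.strictMono_iff_lt_succ]
  refine forall_congr' fun t => ?_
  have hne : σ t.castSucc ≠ σ t.succ := fun h => by
    have := σ.injective h
    simp [Fin.ext_iff] at this
  have hiff : ¬ (σ t.succ < σ t.castSucc) ↔ σ t.castSucc < σ t.succ := by
    rw [not_lt]; exact ⟨fun h => lt_of_le_of_ne h hne, le_of_lt⟩
  rw [hiff]
  exact Prod.Lex.toLex_lt_toLex

lemma descents_eq (N : ℕ) (σ : Equiv.Perm (Fin (N+1))) :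
    descents ⇑σ = (Finset.univ.filter fun t : Fin N => σ t.succ < σ t.castSucc).card := by
  classical
  unfold descents
  rw [← Fintype.card_subtype, ← Nat.card_eq_fintype_card]
  refine Nat.card_congr
    { toFun := fun i => ⟨⟨i.1.1, ?_⟩, ?_⟩
      invFun := fun t => ⟨t.1.castSucc, ?_⟩
      left_inv := fun i => rfl
      right_inv := fun t => rfl }
  · obtain ⟨h, _⟩ := i.2; omega
  · obtain ⟨h, h2⟩ := i.2; exact h2
  · exact ⟨by simp, t.2⟩

lemma sort_count (k n : ℕ) (hn : 1 ≤ n) (σ : Equiv.Perm (Fin n)) :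
    Nat.card {f : Fin n → Fin (k+1) // Tuple.sort f = σ} = (k + n - descents ⇑σ).choose n := by
  classical
  obtain ⟨N, rfl⟩ : ∃ N, n = N + 1 := ⟨n - 1, by omega⟩
  rw [descents_eq, ← mono_count k N (fun t : Fin N => σ t.succ < σ t.castSucc)]
  refine Nat.card_congr ((Equiv.arrowCongr σ.symm (Equiv.refl _)).subtypeEquiv fun f => ?_)
  rw [sort_iff]
  rfl

open PowerSeries in
lemma carlitz (n : ℕ) (hn : 1 ≤ n) :
    eulP n = (PowerSeries.mk fun k => ((k : ℝ) + 1) ^ n) * (1 - X) ^ (n + 1) := by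
  classical
  have key : eulP n * (PowerSeries.mk fun d => (Nat.choose (n + d) n : ℝ))
      = PowerSeries.mk fun k => ((k : ℝ) + 1) ^ n := by
    ext k
    rw [coeff_mk, eulP, Finset.sum_mul, map_sum]
    have h : Fintype.card (Fin n → Fin (k+1)) = ∑ σ : Equiv.Perm (Fin n), (k + n - descents ⇑σ).choose n := by
      rw [← Fintype.card_congr (Equiv.sigmaFiberEquiv (fun f : Fin n → Fin (k+1) => Tuple.sort f)),
        Fintype.card_sigma]
      refine Finset.sum_congr rfl fun σ _ => ?_
      rw [← sort_count k n hn σ, Nat.card_eq_fintype_card]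
    have h' : ((k : ℝ) + 1) ^ n = ∑ σ : Equiv.Perm (Fin n), ((k + n - descents ⇑σ).choose n : ℝ) := by
      rw [Fintype.card_fun, Fintype.card_fin, Fintype.card_fin] at h
      exact_mod_cast h
    rw [h']
    refine Finset.sum_congr rfl fun σ _ => ?_
    rw [coeff_X_pow_mul', coeff_mk]
    split_ifs with hd
    · congr 2; omega
    · rw [Nat.choose_eq_zero_of_lt (by omega)]; simp
  rw [← key, mul_assoc, mk_add_choose_mul_one_sub_pow_eq_one, mul_one]

open PowerSeries in
lemma boxQ_mul (b : ℕ) : boxQ b * (1 - X) = 1 - X ^ b := by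
  rw [boxQ]
  exact geom_sum_mul_neg X b

open PowerSeries in
lemma eul_section (b n : ℕ) (hb : 1 ≤ b) (hn : 1 ≤ n) (j : ℕ) :
    coeff ((j + 1) * b - 1) (eulP n * boxQ b ^ (n + 1)) = b ^ n * coeff j (eulP n) := by
  have h : eulP n * boxQ b ^ (n + 1) =
      (PowerSeries.mk fun k => ((k : ℝ) + 1) ^ n) * (1 - X ^ b) ^ (n + 1) := by
    rw [carlitz n hn, ← boxQ_mul, mul_pow]; ring
  rw [h, section_mul b (n+1) hb _ (C ((b:ℝ) ^ n) * PowerSeries.mk fun k => ((k : ℝ) + 1) ^ n),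
    mul_assoc, ← carlitz n hn, coeff_C_mul]
  intro j
  rw [coeff_C_mul, coeff_mk, coeff_mk, ← mul_pow]
  congr 1
  have : 1 ≤ (j + 1) * b := by nlinarith
  push_cast [Nat.cast_sub this]
  ring

open PowerSeries in
lemma stationary (b n : ℕ) (hb : 1 ≤ b) (hn : 1 ≤ n) (j : Fin n) :
    ∑ i : Fin n, eulerStat n i * PM b n i j = eulerStat n j := by
  classical
  have h := eul_section b n hb hn j
  have hE : eulP n = ∑ i : Fin n, C (eulerStat n i * n.factorial) * X ^ (i:ℕ) := by
    ext m
    rw [map_sum]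
    simp only [coeff_C_mul, coeff_X_pow, mul_ite, mul_one, mul_zero]
    by_cases hm : m < n
    · rw [Finset.sum_eq_single (⟨m, hm⟩ : Fin n)]
      · simp [coeff_eulP]
      · intro x _ hx
        rw [if_neg]
        rintro rfl
        exact hx rfl
      · simp
    · rw [Finset.sum_eq_zero, eulP, map_sum]
      · refine Finset.sum_eq_zero fun σ _ => ?_
        rw [coeff_X_pow, if_neg]
        have := descents_lt hn σ
        omega
      · intro x _
        rw [if_neg (by omega)]
  rw [coeff_eulP] at h
  rw [hE, Finset.sum_mul, map_sum] at h
  simp only [mul_assoc, coeff_C_mul] at h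
  have hf : (n.factorial : ℝ) ≠ 0 := by positivity
  have hbn : (b : ℝ) ^ n ≠ 0 := by positivity
  apply mul_left_cancel₀ hf
  apply mul_left_cancel₀ hbn
  calc _ = ∑ i : Fin n, eulerStat n i * (n.factorial * coeff ((j + 1) * b - 1) (X ^ (i : ℕ) * boxQ b ^ (n + 1))) := by
        rw [Finset.mul_sum, Finset.mul_sum]
        refine Finset.sum_congr rfl fun i _ => ?_
        rw [PM_eq b n hb]
        field_simp
    _ = _ := by rw [h]; ring

lemma eulerStat_pos (n j : ℕ) (hj : j < n) : 0 < eulerStat n j := by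
  classical
  unfold eulerStat
  apply div_pos _ (by positivity)
  norm_cast
  rw [Nat.card_pos_iff]
  refine ⟨?_, inferInstance⟩
  let g : Fin n → Fin n := fun i => if h : i.1 ≤ j then ⟨j - i, by omega⟩ else i
  have hg : Function.Involutive g := by
    intro i
    ext
    simp only [g]
    split_ifs <;> simp_all <;> omega
  refine ⟨⟨hg.toPerm g, ?_⟩⟩
  unfold descents
  rw [Nat.card_eq_fintype_card, Fintype.card_subtype]
  have : (Finset.univ.filter fun i : Fin n => ∃ h : i.1 + 1 < n, (hg.toPerm g) ⟨i.1 + 1, h⟩ < (hg.toPerm g) i)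
      = Finset.Iio (⟨j, hj⟩ : Fin n) := by
    ext i
    simp only [Finset.mem_filter, Finset.mem_univ, true_and, Finset.mem_Iio, Function.Involutive.coe_toPerm, g]
    rw [Fin.lt_def]
    constructor
    · rintro ⟨h, h2⟩
      rw [Fin.lt_def] at h2
      split_ifs at h2 <;> simp at * <;> omega
    · intro h
      simp only at h
      refine ⟨by omega, ?_⟩
      rw [dif_pos (by omega), dif_pos (by omega), Fin.lt_def]
      simp only
      omega
  rw [this, Fin.card_Iio]

lemma PM_tp2 (b n : ℕ) (hb : 1 ≤ b) (i i' j j' : Fin n) (hi : i ≤ i') (hj : j ≤ j') :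
    PM b n i' j * PM b n i j' ≤ PM b n i j * PM b n i' j' := by
  rw [PM_eq b n hb, PM_eq b n hb, PM_eq b n hb, PM_eq b n hb, div_mul_div_comm, div_mul_div_comm]
  apply div_le_div_of_nonneg_right _ (by positivity)
  rw [mul_comm]
  apply box_tp2
  · exact hi
  · have : ((j:ℕ) + 1) * b ≤ ((j':ℕ)+1) * b := Nat.mul_le_mul_right _ (by simpa using hj)
    omega

lemma cross (b n : ℕ) (hb : 1 ≤ b) (hn : 1 ≤ n) (r : ℕ) : ∀ i k : Fin n, i ≤ k →
    (PM b n ^ r) ⟨0, hn⟩ k * eulerStat n i ≤ (PM b n ^ r) ⟨0, hn⟩ i * eulerStat n k := by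
  induction r with
  | zero =>
    intro i k hik
    rcases hik.eq_or_lt with h | h
    · rw [h]
    · rw [pow_zero, Matrix.one_apply_ne, zero_mul]
      · apply mul_nonneg
        · rw [Matrix.one_apply]; split_ifs <;> norm_num
        · exact (eulerStat_pos n k k.2).le
      · rintro rfl
        simp [Fin.lt_def] at h
  | succ r ih =>
    intro i k hik
    rw [← stationary b n hb hn i, ← stationary b n hb hn k, pow_succ, Matrix.mul_apply, Matrix.mul_apply]
    apply cb_ineq
    · intro j _ l _ h
      exact ih j l h.le
    · intro j _ l _ h
      exact PM_tp2 b n hb j l i k h.le hik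

/-- **Theorem 7(1) of Diaconis–Fulman**: for every `r ≥ 0` the function
`j ↦ P_b^r(0,j)/π(j)` is non-increasing on `{0,…,n−1}`; consequently the separation
distance of the carries chain started at `0`,
`sep(r) = max_j [1 − P_b^r(0,j)/π(j)]`, is attained at the state `j = n−1`. -/
theorem separation_attained_at_last (b n : ℕ) (hb : 2 ≤ b) (hn : 1 ≤ n) (r : ℕ) :
    (∀ j j' : Fin n, j ≤ j' →
        (PM b n ^ r) ⟨0, hn⟩ j' / eulerStat n (j' : ℕ) ≤
          (PM b n ^ r) ⟨0, hn⟩ j / eulerStat n (j : ℕ)) ∧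
      (∀ j : Fin n,
        1 - (PM b n ^ r) ⟨0, hn⟩ j / eulerStat n (j : ℕ) ≤
          1 - (PM b n ^ r) ⟨0, hn⟩ ⟨n - 1, by omega⟩ / eulerStat n (n - 1)) := by
  have main : ∀ j j' : Fin n, j ≤ j' →
        (PM b n ^ r) ⟨0, hn⟩ j' / eulerStat n (j' : ℕ) ≤
          (PM b n ^ r) ⟨0, hn⟩ j / eulerStat n (j : ℕ) := by
    intro j j' h
    rw [div_le_div_iff₀ (eulerStat_pos n j' j'.2) (eulerStat_pos n j j.2)]
    exact cross b n (by omega) hn r j j' h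
  refine ⟨main, fun j => ?_⟩
  have := main j ⟨n - 1, by omega⟩ (by rw [Fin.le_def]; simp only; omega)
  simp only at this
  linarith
end

section
/- Fix integers b ≥ 2, n ≥ 1 and r ≥ 0, and let P_b be the Holte carries matrix. Then the (0, n−1) entry of the r-th matrix power of P_b equals binom(b^r, n)/b^{rn}; i.e., (P_b)^r(0, n−1) = binom(b^r, n)·b^{−rn}. (This is the probability that r successive b-shuffles of n cards, started at the identity, produce the unique permutation with n−1 descents.) -/
/-- The condition in `PM` says that the carry `(i + ∑ x) / b` equals `j`. -/
theorem carry_iff (b j s : ℕ) (hb : 0 < b) :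
    (j * b ≤ s ∧ s ≤ (j + 1) * b - 1) ↔ s / b = j := by
  rw [Nat.div_eq_iff hb]
  have : (j + 1) * b = j * b + b := by ring
  omega

theorem PM_apply (b n : ℕ) (hb : 0 < b) (i j : Fin n) :
    PM b n i j =
      (∑ x : Fin n → Fin b,
        if ((i : ℕ) + ∑ t, (x t : ℕ)) / b = (j : ℕ) then (1 : ℝ) else 0) / (b : ℝ) ^ n := by
  classical
  unfold PM
  simp only [Matrix.of_apply, carry_iff b _ _ hb]
  rw [Nat.card_eq_fintype_card, Fintype.card_subtype, Finset.sum_boole]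

theorem carry_lt (b n : ℕ) (hb : 0 < b) (i : Fin n) (x : Fin n → Fin b) :
    ((i : ℕ) + ∑ t, (x t : ℕ)) / b < n := by
  rw [Nat.div_lt_iff_lt_mul hb]
  have h : ∑ t, ((x t : ℕ) + 1) ≤ ∑ _t : Fin n, b :=
    Finset.sum_le_sum fun t _ => (x t).2
  simp [Finset.sum_add_distrib] at h
  have := i.2
  omega

theorem PM_mul (a b n : ℕ) (ha : 0 < a) (hb : 0 < b) :
    PM b n * PM a n = PM (a * b) n := by
  classical
  ext i k
  rw [Matrix.mul_apply, PM_apply _ _ (Nat.mul_pos ha hb)]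
  simp only [PM_apply b n hb, PM_apply a n ha]
  have key : ∀ j : Fin n,
      ((∑ x : Fin n → Fin b,
        if ((i : ℕ) + ∑ t, (x t : ℕ)) / b = (j : ℕ) then (1 : ℝ) else 0) / (b : ℝ) ^ n) *
      ((∑ y : Fin n → Fin a,
        if ((j : ℕ) + ∑ t, (y t : ℕ)) / a = (k : ℕ) then (1 : ℝ) else 0) / (a : ℝ) ^ n) =
      (∑ x : Fin n → Fin b, if (⟨_, carry_lt b n hb i x⟩ : Fin n) = j then
        (∑ y : Fin n → Fin a,
          if ((j : ℕ) + ∑ t, (y t : ℕ)) / a = (k : ℕ) then (1 : ℝ) else 0) else 0)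
        / ((a * b : ℕ) : ℝ) ^ n := by
    intro j
    rw [div_mul_div_comm, Finset.sum_mul]
    push_cast
    rw [mul_pow, mul_comm ((b : ℝ) ^ n)]
    congr 1
    refine Finset.sum_congr rfl fun x _ => ?_
    simp only [Fin.ext_iff, ite_mul, one_mul, zero_mul]
  rw [Finset.sum_congr rfl fun j _ => key j, ← Finset.sum_div, Finset.sum_comm]
  congr 1
  simp only [Finset.sum_ite_eq, Finset.mem_univ, if_true]
  rw [← Fintype.sum_prod_type']
  refine Fintype.sum_equiv ((Equiv.prodComm _ _).trans
    ((Equiv.arrowProdEquivProdArrow (Fin n) (fun _ => Fin a) (fun _ => Fin b)).symm.trans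
      (Equiv.arrowCongr (Equiv.refl _) finProdFinEquiv))) _ _ ?_
  rintro ⟨x, y⟩
  have h : ∀ t, (((Equiv.prodComm _ _).trans
    ((Equiv.arrowProdEquivProdArrow (Fin n) (fun _ => Fin a) (fun _ => Fin b)).symm.trans
      (Equiv.arrowCongr (Equiv.refl _) finProdFinEquiv))) (x, y) t : ℕ)
      = (x t : ℕ) + b * (y t : ℕ) := fun t => rfl
  simp only [h, Finset.sum_add_distrib, ← Finset.mul_sum]
  rw [mul_comm a b, ← Nat.div_div_eq_div_mul, ← add_assoc, Nat.add_mul_div_left _ _ hb]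

theorem PM_one (n : ℕ) : PM 1 n = 1 := by
  ext i j
  rw [PM_apply _ _ one_pos, Matrix.one_apply]
  simp [Fin.ext_iff]

theorem PM_pow (b n : ℕ) (hb : 0 < b) (r : ℕ) : PM b n ^ r = PM (b ^ r) n := by
  induction r with
  | zero => simp [PM_one]
  | succ r ih => rw [pow_succ', ih, PM_mul _ _ _ (Nat.pow_pos hb) hb, pow_succ]

theorem compl_sum (B n : ℕ) (x : Fin n → Fin B) :
    ∑ t, (B - 1 - (x t : ℕ)) + ∑ t, (x t : ℕ) + n = n * B := by
  have : ∑ t, ((B - 1 - (x t : ℕ)) + (x t : ℕ) + 1) = ∑ _t : Fin n, B :=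
    Finset.sum_congr rfl fun t _ => by have := (x t).2; omega
  simpa [Finset.sum_add_distrib] using this

/-- Complementing the digits turns the extreme carry into a weak composition. -/
def topEquiv (n m : ℕ) (hn : 1 ≤ n) :
    {x : Fin n → Fin (m + n) // (n - 1) * (m + n) ≤ ∑ t, (x t : ℕ)} ≃
      {P : Option (Fin n) → ℕ // ∑ i, P i = m} where
  toFun x := ⟨fun o => o.elim (m - ∑ t, (m + n - 1 - (x.1 t : ℕ)))
      (fun t => m + n - 1 - (x.1 t : ℕ)), by
    have h1 := compl_sum _ _ x.1
    have h2 := x.2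
    obtain ⟨k, rfl⟩ : ∃ k, n = k + 1 := ⟨n - 1, by omega⟩
    rw [Nat.succ_mul] at h1
    simp only [Nat.add_sub_cancel] at h2
    rw [Fintype.sum_option]
    simp only [Option.elim]
    omega⟩
  invFun P := ⟨fun t => ⟨m + n - 1 - P.1 (some t), by omega⟩, by
    have h := P.2
    rw [Fintype.sum_option] at h
    have h3 : ∑ t, (m + n - 1 - P.1 (some t)) + ∑ t, P.1 (some t) + n = n * (m + n) := by
      have : ∑ t, ((m + n - 1 - P.1 (some t)) + P.1 (some t) + 1) = ∑ _t : Fin n, (m + n) :=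
        Finset.sum_congr rfl fun t _ => by
          have : P.1 (some t) ≤ ∑ t, P.1 (some t) :=
            Finset.single_le_sum (f := fun t => P.1 (some t)) (fun _ _ => Nat.zero_le _)
              (Finset.mem_univ t)
          omega
      simpa [Finset.sum_add_distrib] using this
    obtain ⟨k, rfl⟩ : ∃ k, n = k + 1 := ⟨n - 1, by omega⟩
    rw [Nat.succ_mul] at h3
    simp only [Nat.add_sub_cancel]
    omega⟩
  left_inv x := by
    apply Subtype.ext
    funext t
    apply Fin.ext
    have := (x.1 t).2
    simp only [Option.elim]
    omega
  right_inv P := by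
    have h := P.2
    rw [Fintype.sum_option] at h
    have h4 : ∀ t, m + n - 1 - (m + n - 1 - P.1 (some t)) = P.1 (some t) := fun t => by
      have : P.1 (some t) ≤ ∑ t, P.1 (some t) :=
        Finset.single_le_sum (f := fun t => P.1 (some t)) (fun _ _ => Nat.zero_le _)
          (Finset.mem_univ t)
      omega
    apply Subtype.ext
    funext o
    cases o with
    | none =>
      simp only [Option.elim, h4]
      omega
    | some t => simp only [Option.elim, h4]

theorem card_top (B n : ℕ) (hn : 1 ≤ n) :
    Nat.card {x : Fin n → Fin B // (n - 1) * B ≤ ∑ t, (x t : ℕ)} = B.choose n := by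
  rcases lt_or_ge B n with h | h
  · rw [Nat.choose_eq_zero_of_lt h]
    have : IsEmpty {x : Fin n → Fin B // (n - 1) * B ≤ ∑ t, (x t : ℕ)} := by
      refine ⟨fun x => ?_⟩
      have h1 := compl_sum _ _ x.1
      have h2 := x.2
      obtain ⟨k, rfl⟩ : ∃ k, n = k + 1 := ⟨n - 1, by omega⟩
      rw [Nat.succ_mul] at h1
      simp only [Nat.add_sub_cancel] at h2
      omega
    exact Nat.card_of_isEmpty
  · obtain ⟨m, rfl⟩ : ∃ m, B = m + n := ⟨B - n, by omega⟩
    rw [Nat.card_congr ((topEquiv n m hn).trans (Sym.equivNatSumOfFintype _ m).symm),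
      Nat.card_eq_fintype_card, Sym.card_sym_eq_choose, Fintype.card_option, Fintype.card_fin,
      show n + 1 + m - 1 = m + n by omega, Nat.choose_symm_add]


/-- **The top-right entry of powers of Holte's matrix** (from the proof of Theorem 7 of
Diaconis–Fulman, via Bayer–Diaconis): `P_b^r(0, n−1) = binom(b^r, n)/b^{rn}`, the
probability that `r` successive `b`-shuffles of `n` cards, started at the identity,
produce the unique permutation with `n−1` descents. -/
theorem power_entry_eq_choose (b n : ℕ) (hb : 2 ≤ b) (hn : 1 ≤ n) (r : ℕ) :
    (PM b n ^ r) ⟨0, hn⟩ ⟨n - 1, by omega⟩ =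
      ((b ^ r).choose n : ℝ) / (b : ℝ) ^ (r * n) := by
  rw [PM_pow b n (by omega) r]
  have hB : 0 < b ^ r := Nat.pow_pos (by omega)
  rw [← card_top _ _ hn, pow_mul]
  unfold PM
  simp only [Matrix.of_apply, zero_add]
  push_cast
  congr 2
  refine Nat.card_congr (Equiv.subtypeEquivRight fun x => ?_)
  refine ⟨fun h => h.1, fun h => ⟨h, ?_⟩⟩
  have h1 := compl_sum _ _ x
  rw [Nat.sub_add_cancel hn]
  omega
end

section
/- Fix integers k ≥ 1 and b ≥ 2, and let K_b be the k×k multiplication-carries matrix. Then K_b is doubly stochastic: for every 0 ≤ i ≤ k−1, Σ_{j=0}^{k−1} K_b(i,j) = 1, and for every 0 ≤ j ≤ k−1, Σ_{i=0}^{k−1} K_b(i,j) = 1. In particular the uniform distribution on {0,…,k−1} is stationary for the carries chain of base-b multiplication by k. -/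
/-- The multiplication-carries matrix: `K_b(i,j)` is the transition probability from
carry `i` to carry `j` when multiplying a number with uniform random base-`b` digits by
`k`, i.e. `K_b(i,j) = (1/b)·#{d ∈ {0,…,b−1} : ⌊(i + k·d)/b⌋ = j}`. -/
noncomputable def Kmat (k b : ℕ) (i j : ℕ) : ℝ :=
  (Nat.card {d : Fin b // (i + k * (d : ℕ)) / b = j} : ℝ) / b

theorem Kmat_eq_filter (k b i j : ℕ) :
    Kmat k b i j = (((Finset.range b).filter (fun d => (i + k * d) / b = j)).card : ℝ) / b := by
  unfold Kmat
  congr 2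
  rw [Nat.card_eq_fintype_card, Fintype.card_subtype]
  refine Finset.card_bij (fun d _ => (d : ℕ)) ?_ ?_ ?_
  · intro d hd
    simpa using hd
  · intro d _ e _ h
    exact Fin.ext h
  · intro d hd
    simp only [Finset.mem_filter, Finset.mem_range] at hd
    exact ⟨⟨d, hd.1⟩, by simpa using hd.2, rfl⟩

/-- The multiplication-carries matrix is **doubly stochastic**: all row sums and all
column sums equal `1`.  In particular the uniform distribution on `{0,…,k−1}` is
stationary for the carries chain of base-`b` multiplication by `k`. -/
theorem Kmat_doubly_stochastic (k b : ℕ) (hk : 1 ≤ k) (hb : 2 ≤ b) :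
    (∀ i, i < k → ∑ j ∈ Finset.range k, Kmat k b i j = 1) ∧
      (∀ j, j < k → ∑ i ∈ Finset.range k, Kmat k b i j = 1) := by
  have hb0 : (b : ℝ) ≠ 0 := by
    have : b ≠ 0 := by omega
    exact_mod_cast this
  have hbp : 0 < b := by omega
  constructor
  · intro i hi
    simp only [Kmat_eq_filter]
    rw [← Finset.sum_div, div_eq_one_iff_eq hb0, ← Nat.cast_sum]
    congr 1
    rw [← Finset.card_eq_sum_card_fiberwise, Finset.card_range]
    intro d hd
    simp only [Finset.coe_range, Set.mem_Iio] at hd ⊢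
    rw [Nat.div_lt_iff_lt_mul hbp]
    have : k * (d + 1) ≤ k * b := Nat.mul_le_mul_left k hd
    rw [Nat.mul_succ] at this
    omega
  · intro j hj
    simp only [Kmat_eq_filter]
    rw [← Finset.sum_div, div_eq_one_iff_eq hb0, ← Nat.cast_sum]
    congr 1
    have h1 : (Finset.Ico (j * b) (j * b + b)).card = b := by simp
    have h2 : (Finset.Ico (j * b) (j * b + b)).card = ∑ i ∈ Finset.range k,
        ((Finset.Ico (j * b) (j * b + b)).filter (fun n => n % k = i)).card := by
      apply Finset.card_eq_sum_card_fiberwise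
      intro n _
      simpa using Nat.mod_lt n hk
    refine Eq.trans ?_ (h2.symm.trans h1)
    refine Finset.sum_congr rfl ?_
    intro i hi
    have hik : i < k := Finset.mem_range.mp hi
    refine Finset.card_bij (fun d _ => i + k * d) ?_ ?_ ?_
    · intro d hd
      simp only [Finset.mem_filter, Finset.mem_range, Finset.mem_Ico] at hd ⊢
      obtain ⟨_, h⟩ := hd
      rw [Nat.div_eq_iff hbp] at h
      refine ⟨by omega, ?_⟩
      rw [Nat.add_mul_mod_self_left, Nat.mod_eq_of_lt hik]
    · intro d _ e _ h
      exact Nat.eq_of_mul_eq_mul_left hk (Nat.add_left_cancel h)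
    · intro n hn
      simp only [Finset.mem_filter, Finset.mem_Ico] at hn
      obtain ⟨⟨h3, h4⟩, h5⟩ := hn
      have h6 : i + k * (n / k) = n := by rw [← h5]; exact Nat.mod_add_div n k
      refine ⟨n / k, ?_, h6⟩
      simp only [Finset.mem_filter, Finset.mem_range, h6]
      constructor
      · rw [Nat.div_lt_iff_lt_mul hk]
        have : (j + 1) * b ≤ k * b := Nat.mul_le_mul_right b hj
        rw [Nat.succ_mul, Nat.mul_comm k b] at this
        omega
      · rw [Nat.div_eq_iff hbp]
        omega
end

section
/- Fix integers k ≥ 1 and b ≥ 2, and let K_b be the k×k multiplication-carries matrix. Then K_b is a generalized circulant: each column is obtained from the previous column by shifting it downward by b mod k. Precisely, for all 0 ≤ i,j ≤ k−1, K_b((i + b) mod k, (j + 1) mod k) = K_b(i, j). -/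
/-- Reparametrize the digits `d` with carry `j` by the remainder of `i + k * d` mod `b`. -/
def carryEquiv (k b i j : ℕ) (hb : 0 < b) (hi : i < k) (hj : j < k) :
    {d : Fin b // (i + k * (d : ℕ)) / b = j} ≃ {t : Fin b // (j * b + (t : ℕ)) % k = i} where
  toFun d := ⟨⟨(i + k * (d.1 : ℕ)) % b, Nat.mod_lt _ hb⟩, by
    obtain ⟨d, hd⟩ := d
    have h := Nat.div_add_mod' (i + k * (d : ℕ)) b
    rw [hd] at h
    simp only [h, Nat.add_mul_mod_self_left, Nat.mod_eq_of_lt hi]⟩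
  invFun t := ⟨⟨(j * b + (t.1 : ℕ)) / k, by
    rw [Nat.div_lt_iff_lt_mul (by omega)]
    have := t.1.2
    nlinarith⟩, by
    obtain ⟨t, ht⟩ := t
    have h := Nat.mod_add_div (j * b + (t : ℕ)) k
    rw [ht] at h
    simp only [h]
    rw [mul_comm j b, Nat.mul_add_div hb, Nat.div_eq_of_lt t.2, add_zero]⟩
  left_inv := by
    rintro ⟨d, hd⟩
    have h := Nat.div_add_mod' (i + k * (d : ℕ)) b
    rw [hd] at h
    apply Subtype.ext
    apply Fin.ext
    simp only [h]
    rw [Nat.add_mul_div_left _ _ (by omega), Nat.div_eq_of_lt hi, zero_add]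
  right_inv := by
    rintro ⟨t, ht⟩
    have h := Nat.mod_add_div (j * b + (t : ℕ)) k
    rw [ht] at h
    apply Subtype.ext
    apply Fin.ext
    simp only [h]
    rw [mul_comm j b, Nat.mul_add_mod, Nat.mod_eq_of_lt t.2]

/-- The multiplication-carries matrix is a **generalized circulant**: each column is
obtained from the previous column by shifting it downward by `b mod k`; precisely,
`K_b((i + b) mod k, (j + 1) mod k) = K_b(i, j)`. -/
theorem Kmat_generalized_circulant (k b : ℕ) (hk : 1 ≤ k) (hb : 2 ≤ b)
    (i j : ℕ) (hi : i < k) (hj : j < k) :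
    Kmat k b ((i + b) % k) ((j + 1) % k) = Kmat k b i j := by
  have hk' : 0 < k := hk
  have hb' : 0 < b := by omega
  unfold Kmat
  rw [Nat.card_congr (carryEquiv k b i j hb' hi hj),
    Nat.card_congr (carryEquiv k b _ _ hb' (Nat.mod_lt (i + b) hk') (Nat.mod_lt (j + 1) hk'))]
  have key : ∀ t : Fin b, ((j + 1) % k * b + (t : ℕ)) % k = (i + b) % k ↔
      (j * b + (t : ℕ)) % k = i := by
    intro t
    have h1 : (j + 1) % k * b + (t : ℕ) ≡ (j * b + t) + b [MOD k] := by
      have : (j * b + (t : ℕ)) + b = (j + 1) * b + t := by ring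
      rw [this]
      exact ((Nat.mod_modEq _ _).mul_right b).add_right _
    constructor
    · intro h
      have h2 : (j * b + (t : ℕ)) + b ≡ i + b [MOD k] := h1.symm.trans h
      have h3 : (j * b + (t : ℕ)) ≡ i [MOD k] := Nat.ModEq.add_right_cancel' b h2
      exact Nat.mod_eq_of_modEq h3 hi
    · intro h
      have h3 : (j * b + (t : ℕ)) ≡ i [MOD k] := by
        rw [Nat.ModEq, h, Nat.mod_eq_of_lt hi]
      exact h1.trans (h3.add_right b)
  rw [Nat.card_congr (Equiv.subtypeEquivRight key)]
end

section
/- Fix an integer k ≥ 1 and integers a, b ≥ 1, and let K_a, K_b, K_{ab} be the k×k multiplication-carries matrices for multiplication by k in bases a, b and ab respectively. Then K_{ab} = K_a · K_b as matrices; i.e., for all 0 ≤ i,j ≤ k−1, K_{ab}(i,j) = Σ_{l=0}^{k−1} K_a(i,l)·K_b(l,j). -/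
lemma Kmat_eq_sum (k b i j : ℕ) :
    Kmat k b i j = (∑ d : Fin b, if (i + k * (d : ℕ)) / b = j then (1 : ℝ) else 0) / b := by
  unfold Kmat
  rw [Nat.card_eq_fintype_card, Fintype.card_subtype, Finset.sum_boole]

/-- **The multiplication-carries matrices multiply like their bases**: for a fixed
multiplier `k`, the carries matrices satisfy `K_{ab} = K_a · K_b`. -/
theorem Kmat_mul (k a b : ℕ) (hk : 1 ≤ k) (ha : 1 ≤ a) (hb : 1 ≤ b)
    (i j : ℕ) (hi : i < k) (hj : j < k) :
    Kmat k (a * b) i j = ∑ l ∈ Finset.range k, Kmat k a i l * Kmat k b l j := by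
  rw [mul_comm a b]
  simp only [Kmat_eq_sum, div_mul_div_comm]
  rw [← Finset.sum_div]
  push_cast
  rw [mul_comm (b : ℝ) a]
  congr 1
  rw [← finProdFinEquiv.sum_comp, Fintype.sum_prod_type, Finset.sum_comm]
  simp only [Finset.sum_mul]
  conv_rhs => rw [Finset.sum_comm]
  refine Finset.sum_congr rfl fun x _ => ?_
  have hx : (i + k * (x : ℕ)) / a ∈ Finset.range k := by
    rw [Finset.mem_range, Nat.div_lt_iff_lt_mul (by omega)]
    have := x.2
    nlinarith
  rw [Finset.sum_eq_single_of_mem _ hx]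
  · rw [if_pos rfl, one_mul]
    refine Finset.sum_congr rfl fun y _ => ?_
    have : (i + k * ((finProdFinEquiv (y, x) : Fin (b * a)) : ℕ)) / (b * a)
        = ((i + k * (x : ℕ)) / a + k * (y : ℕ)) / b := by
      simp only [finProdFinEquiv_apply_val]
      rw [mul_comm b a, ← Nat.div_div_eq_div_mul, ← Nat.add_mul_div_left _ _ (by omega : 0 < a)]
      congr 2
      ring
    rw [this]
  · intro l _ hl
    rw [if_neg (Ne.symm hl), zero_mul]
end

section
/- Fix integers k ≥ 1, b ≥ 2 and r ≥ 1. Let K_b be the k×k multiplication-carries matrix, and let K_0^r(j) = (K_b)^r(0,j) be the distribution of the carry after r steps started from carry 0. Then the total variation distance to the uniform distribution satisfies (1/2)·Σ_{j=0}^{k−1} |K_0^r(j) − 1/k| ≤ k/(2·b^r). -/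
/-- The multiplication-carries matrix as a `k × k` real matrix: `K_b(i,j)` is the
transition probability from carry `i` to carry `j` when multiplying a number with
uniform random base-`b` digits by `k`, i.e.
`K_b(i,j) = (1/b)·#{d ∈ {0,…,b−1} : ⌊(i + k·d)/b⌋ = j}`. -/
noncomputable def KM (k b : ℕ) : Matrix (Fin k) (Fin k) ℝ :=
  Matrix.of fun i j =>
    (Nat.card {d : Fin b // ((i : ℕ) + k * (d : ℕ)) / b = (j : ℕ)} : ℝ) / b

theorem KM_apply (k b : ℕ) (i j : Fin k) :
    KM k b i j = (∑ d ∈ Finset.range b,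
      if ((i : ℕ) + k * d) / b = (j : ℕ) then (1 : ℝ) else 0) / b := by
  unfold KM
  rw [Matrix.of_apply, Nat.card_eq_fintype_card, Fintype.card_subtype,
    Finset.sum_range (fun d => if ((i : ℕ) + k * d) / b = (j : ℕ) then (1 : ℝ) else 0)]
  simp

theorem sum_range_mul_aux (f : ℕ → ℝ) (B b : ℕ) :
    ∑ d ∈ Finset.range (B * b), f d =
      ∑ d1 ∈ Finset.range b, ∑ d0 ∈ Finset.range B, f (B * d1 + d0) := by
  induction b with
  | zero => simp
  | succ n ih => rw [Nat.mul_succ, Finset.sum_range_add, ih, Finset.sum_range_succ]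

theorem KM_mul (k B b : ℕ) (hB : 0 < B) : KM k B * KM k b = KM k (B * b) := by
  ext i l
  rw [Matrix.mul_apply, KM_apply k (B * b), sum_range_mul_aux]
  simp only [KM_apply]
  have key : ∀ d1 d0, d0 ∈ Finset.range B →
      (if ((i : ℕ) + k * (B * d1 + d0)) / (B * b) = (l : ℕ) then (1 : ℝ) else 0) =
      ∑ j : Fin k, (if ((i : ℕ) + k * d0) / B = (j : ℕ) then (1 : ℝ) else 0) *
        (if ((j : ℕ) + k * d1) / b = (l : ℕ) then (1 : ℝ) else 0) := by
    intro d1 d0 h0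
    rw [Finset.mem_range] at h0
    have hlt : ((i : ℕ) + k * d0) / B < k := by
      rw [Nat.div_lt_iff_lt_mul hB]
      have := i.2
      nlinarith
    rw [Finset.sum_eq_single (⟨_, hlt⟩ : Fin k)]
    · have : (i : ℕ) + k * (B * d1 + d0) = ((i : ℕ) + k * d0) + B * (k * d1) := by ring
      rw [← Nat.div_div_eq_div_mul, this, Nat.add_mul_div_left _ _ hB]
      simp
    · intro j _ hj
      rw [if_neg, zero_mul]
      intro h
      exact hj (Fin.ext h.symm)
    · simp
  rw [Finset.sum_congr rfl fun d1 _ => Finset.sum_congr rfl (key d1)]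
  simp only [div_mul_div_comm, ← Finset.sum_div, Nat.cast_mul]
  congr 1
  rw [Finset.sum_congr rfl fun d1 _ => Finset.sum_comm, Finset.sum_comm]
  refine Finset.sum_congr rfl fun j _ => ?_
  rw [Finset.sum_mul_sum, Finset.sum_comm]

theorem KM_pow (k b : ℕ) (hb : 0 < b) (r : ℕ) (hr : 1 ≤ r) : KM k b ^ r = KM k (b ^ r) := by
  induction r, hr using Nat.le_induction with
  | base => simp
  | succ n _ ih => rw [pow_succ, ih, KM_mul _ _ _ (by positivity), ← pow_succ]

theorem KM_zero_bound (k B : ℕ) (hk : 1 ≤ k) (hB : 0 < B) (j : Fin k) :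
    |KM k B ⟨0, hk⟩ j - 1 / (k : ℝ)| ≤ 1 / B := by
  rw [KM_apply, Finset.sum_boole]
  obtain ⟨c1, h1, h1'⟩ : ∃ c, (j : ℕ) * B ≤ k * c ∧ k * c < j * B + k := by
    refine ⟨(j * B + k - 1) / k, ?_, ?_⟩
    · have := Nat.div_add_mod (j * B + k - 1) k
      have := Nat.mod_lt (j * B + k - 1) hk
      omega
    · have := Nat.mul_div_le (j * B + k - 1) k
      omega
  obtain ⟨c2, h2, h2'⟩ : ∃ c, ((j : ℕ) + 1) * B ≤ k * c ∧ k * c < (j + 1) * B + k := by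
    refine ⟨((j + 1) * B + k - 1) / k, ?_, ?_⟩
    · have := Nat.div_add_mod ((j + 1) * B + k - 1) k
      have := Nat.mod_lt ((j + 1) * B + k - 1) hk
      omega
    · have := Nat.mul_div_le ((j + 1) * B + k - 1) k
      omega
  have hj := j.2
  have hset : Finset.filter (fun d => ((⟨0, hk⟩ : Fin k) + k * d : ℕ) / B = (j : ℕ))
      (Finset.range B) = Finset.Ico c1 c2 := by
    ext d
    simp only [Finset.mem_filter, Finset.mem_range, Finset.mem_Ico, zero_add,
      Nat.div_eq_iff hB]
    have e : ((j : ℕ) + 1) * B = j * B + B := by ring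
    have hle : ((j : ℕ) + 1) * B ≤ k * B := Nat.mul_le_mul_right _ hj
    constructor
    · rintro ⟨_, ha, hc⟩
      constructor
      · by_contra! h
        have : k * (d + 1) ≤ k * c1 := Nat.mul_le_mul_left _ h
        rw [mul_add] at this
        omega
      · by_contra! h
        have : k * c2 ≤ k * d := Nat.mul_le_mul_left _ h
        omega
    · rintro ⟨ha, hc⟩
      have a1 : k * c1 ≤ k * d := Nat.mul_le_mul_left _ ha
      have a2 : k * (d + 1) ≤ k * c2 := Nat.mul_le_mul_left _ hc
      rw [mul_add] at a2
      refine ⟨?_, ?_, ?_⟩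
      · by_contra! h
        have : k * B ≤ k * d := Nat.mul_le_mul_left _ h
        omega
      · omega
      · omega
  have hle : c1 ≤ c2 := by
    by_contra! h
    have : k * (c2 + 1) ≤ k * c1 := Nat.mul_le_mul_left _ h
    rw [mul_add] at this
    have e : ((j : ℕ) + 1) * B = j * B + B := by ring
    omega
  rw [hset, Nat.card_Ico, Nat.cast_sub hle]
  have hk' : (0 : ℝ) < k := by exact_mod_cast hk
  have hB' : (0 : ℝ) < B := by exact_mod_cast hB
  have g1 : ((j : ℕ) : ℝ) * B ≤ k * c1 := by exact_mod_cast h1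
  have g1' : (k : ℝ) * c1 < (j : ℕ) * B + k := by exact_mod_cast h1'
  have g2 : (((j : ℕ) : ℝ) + 1) * B ≤ k * c2 := by exact_mod_cast h2
  have g2' : (k : ℝ) * c2 < ((j : ℕ) + 1) * B + k := by exact_mod_cast h2'
  have e : ((c2 : ℝ) - c1) / B - 1 / k = ((k * c2 - k * c1 - B) / k) / B := by
    field_simp
  rw [e, abs_div, abs_of_pos hB']
  gcongr
  rw [abs_div, abs_of_pos hk', div_le_one hk', abs_le]
  constructor <;> linarith

/-- **Proposition 8 of Diaconis–Fulman**: the total variation distance of the carries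
chain for base-`b` multiplication by `k`, started at `0`, from the uniform distribution
after `r` steps is at most `k/(2·b^r)`. -/
theorem Kmat_total_variation_bound (k b : ℕ) (hk : 1 ≤ k) (hb : 2 ≤ b) (r : ℕ) (hr : 1 ≤ r) :
    (1 / 2) * ∑ j : Fin k, |(KM k b ^ r) ⟨0, hk⟩ j - 1 / (k : ℝ)| ≤
      (k : ℝ) / (2 * (b : ℝ) ^ r) := by
  have hB : 0 < b ^ r := by positivity
  rw [KM_pow k b (by omega) r hr]
  have := Finset.sum_le_sum fun j (_ : j ∈ (Finset.univ : Finset (Fin k))) =>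
    KM_zero_bound k (b ^ r) hk hB j
  rw [Finset.sum_const, Finset.card_univ, Fintype.card_fin, nsmul_eq_mul] at this
  calc _ ≤ (1 / 2) * ((k : ℝ) * (1 / ((b ^ r : ℕ) : ℝ))) := by gcongr
    _ = _ := by
      push_cast
      field_simp
end

section
/- Fix integers b ≥ 2 and n ≥ 1. For all 0 ≤ i,j ≤ n−1, the number of n-tuples (x_1,…,x_n) ∈ {0,…,b−1}^n with jb ≤ i + x_1 + ⋯ + x_n ≤ (j+1)b − 1 equals the number of (n+1)-tuples (a_1,…,a_{n+1}) ∈ {0,…,b−1}^{n+1} with a_1 + ⋯ + a_{n+1} = (j+1)b − i − 1. Equivalently, the Holte carries matrix satisfies b^n·P_b(i,j) = [x^{(j+1)b−i−1}] ((1−x^b)/(1−x))^{n+1}, and hence (up to transposition, normalization and reindexing) coincides with the Brenti–Welker matrix governing r-th sections of rational generating functions. -/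
theorem card_tuples_eq (b n i j : ℕ) (hb : 2 ≤ b) :
    Nat.card {x : Fin n → Fin b //
        j * b ≤ i + ∑ t, (x t : ℕ) ∧ i + ∑ t, (x t : ℕ) ≤ (j + 1) * b - 1} =
      Nat.card {a : Fin (n + 1) → Fin b //
        (∑ t, ((a t : ℕ) : ℤ)) = ((j : ℤ) + 1) * b - i - 1} := by
  have hz : ((j : ℤ) + 1) * b = ((j * b : ℕ) : ℤ) + b := by push_cast; ring
  have hm : (j + 1) * b = j * b + b := by ring
  rw [hz, hm]
  refine Nat.card_congr
    { toFun := fun x => ⟨Fin.cons ⟨j * b + b - 1 - i - ∑ t, (x.1 t : ℕ), ?_⟩ x.1, ?_⟩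
      invFun := fun a => ⟨Fin.tail a.1, ?_⟩
      left_inv := ?_
      right_inv := ?_ }
  · have := x.2
    omega
  · have := x.2
    rw [Fin.sum_univ_succ]
    simp only [Fin.cons_zero, Fin.cons_succ]
    rw [← Nat.cast_sum]
    omega
  · have h := a.2
    rw [Fin.sum_univ_succ, ← Nat.cast_sum] at h
    have h0 := (a.1 0).2
    simp only [Fin.tail]
    omega
  · intro x
    simp
  · intro a
    have h := a.2
    rw [Fin.sum_univ_succ, ← Nat.cast_sum] at h
    apply Subtype.ext
    funext t
    refine Fin.cases ?_ (fun t => ?_) t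
    · apply Fin.ext
      simp only [Fin.cons_zero, Fin.tail]
      omega
    · simp [Fin.tail]

open Polynomial in
theorem coeff_geom_pow (b N m : ℕ) :
    ((∑ s ∈ Finset.range b, (X : ℝ[X]) ^ s) ^ N).coeff m =
      (Nat.card {a : Fin N → Fin b // ∑ t, (a t : ℕ) = m} : ℝ) := by
  classical
  rw [Finset.sum_range, Fintype.sum_pow, Nat.card_eq_fintype_card, Fintype.card_subtype]
  simp only [Finset.prod_pow_eq_pow_sum, finset_sum_coeff, coeff_X_pow, Finset.sum_boole,
    eq_comm]

open Polynomial in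
/-- **The Holte carries matrix and the Brenti–Welker matrix** (Section 5.1 of
Diaconis–Fulman): the number of `n`-tuples of digits `x ∈ {0,…,b−1}^n` with
`jb ≤ i + Σ x_t ≤ (j+1)b − 1` equals the number of `(n+1)`-tuples
`a ∈ {0,…,b−1}^{n+1}` with `Σ a_t = (j+1)b − i − 1`; equivalently
`b^n·P_b(i,j) = [x^{(j+1)b−i−1}] ((1−x^b)/(1−x))^{n+1}` (a coefficient at a negative
power being `0`). -/
theorem holte_eq_brenti_welker (b n : ℕ) (hb : 2 ≤ b) (hn : 1 ≤ n)
    (i j : ℕ) (hi : i < n) (hj : j < n) :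
    (Nat.card {x : Fin n → Fin b //
        j * b ≤ i + ∑ t, (x t : ℕ) ∧ i + ∑ t, (x t : ℕ) ≤ (j + 1) * b - 1} =
      Nat.card {a : Fin (n + 1) → Fin b //
        (∑ t, ((a t : ℕ) : ℤ)) = ((j : ℤ) + 1) * b - i - 1}) ∧
    ((b : ℝ) ^ n * Pmat b n i j =
      if i + 1 ≤ (j + 1) * b then
        ((∑ s ∈ Finset.range b, (X : ℝ[X]) ^ s) ^ (n + 1)).coeff ((j + 1) * b - i - 1)
      else 0) := by
  refine ⟨card_tuples_eq b n i j hb, ?_⟩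
  have hb0 : (b : ℝ) ^ n ≠ 0 := by positivity
  rw [Pmat, mul_div_cancel₀ _ hb0, card_tuples_eq b n i j hb]
  have hz : ((j : ℤ) + 1) * b = (((j + 1) * b : ℕ) : ℤ) := by push_cast; ring
  rw [hz]
  split_ifs with h
  · rw [coeff_geom_pow]
    congr 1
    refine Nat.card_congr (Equiv.subtypeEquivRight fun a => ?_)
    rw [← Nat.cast_sum]
    omega
  · rw [Nat.cast_eq_zero, Nat.card_eq_zero]
    left
    refine ⟨fun a => ?_⟩
    have ha := a.2
    rw [← Nat.cast_sum] at ha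
    omega
end
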